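/- Let B be a standard graded polynomial ring over a field K of characteristic zero, and let I ⊆ B be a graded ideal of linear type with μ(I) = ht(I) + 1 = n + 1, where grade(I) = n. Then the projective dimension of the Rees algebra R(I) over the bigraded polynomial ring S = B[y_1, ..., y_{n+1}] equals n if pd_B(B/I) = n, and equals k − 1 if pd_B(B/I) = k > n. -/

import Mathlib

open Ideal

/-- The element `f·X ∈ R(I)` for `f ∈ I`. -/
noncomputable def fX {B : Type*} [CommRing B] (I : Ideal B) (g : B) (hg : g ∈ I) :
    reesAlgebra I :=
  ⟨Polynomial.C g * Polynomial.X, by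
    rw [mem_reesAlgebra_iff]
    intro i
    rcases eq_or_ne i 1 with h | h
    · subst h; simpa using hg
    · simp [Polynomial.coeff_C_mul, Polynomial.coeff_X, h, Ne.symm h]⟩

/-- The presentation `S = B[y_0,…,y_n] → R(I)`, `y_j ↦ f_j X`. -/
noncomputable def reesStructureMap {B : Type*} [CommRing B] {n : ℕ} (I : Ideal B)
    (f : Fin (n + 1) → B) (hf : ∀ j, f j ∈ I) :
    MvPolynomial (Fin (n + 1)) B →ₐ[B] reesAlgebra I :=
  MvPolynomial.aeval (fun j => fX I (f j) (hf j))

/-- The `S`-module structure on `R(I)` induced by the presentation. -/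
noncomputable def reesModule {B : Type*} [CommRing B] {n : ℕ} (I : Ideal B)
    (f : Fin (n + 1) → B) (hf : ∀ j, f j ∈ I) :
    Module (MvPolynomial (Fin (n + 1)) B) (reesAlgebra I) :=
  Module.compHom _ (reesStructureMap I f hf).toRingHom

/-- `p ∈ S` is linear in the `y`-variables. -/
def YLinear {B : Type*} [CommRing B] {n : ℕ} (p : MvPolynomial (Fin (n + 1)) B) : Prop :=
  ∀ w : Fin (n + 1) →₀ ℕ, MvPolynomial.coeff w p ≠ 0 → (∑ j, w j) ≤ 1

/-- `I` is of linear type (with respect to the presentation `φ` coming from the chosen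
generators): the defining ideal of the Rees algebra is generated by elements that are
linear in the second set of variables. -/
def IsLinearTypePres {B : Type*} [CommRing B] {n : ℕ} {I : Ideal B}
    (φ : MvPolynomial (Fin (n + 1)) B →ₐ[B] reesAlgebra I) : Prop :=
  ∃ G : Set (MvPolynomial (Fin (n + 1)) B),
    (∀ p ∈ G, YLinear p) ∧ RingHom.ker φ.toRingHom = Ideal.span G

/-- A free resolution of `M` over `A`. -/
structure FreeRes (A : Type*) [CommRing A] (M : Type*) [AddCommGroup M] [Module A M] where
  ι : ℕ → Type
  d : ∀ i, (ι (i + 1) →₀ A) →ₗ[A] (ι i →₀ A)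
  ε : (ι 0 →₀ A) →ₗ[A] M
  exact_d : ∀ i, Function.Exact (d (i + 1)) (d i)
  exact_ε : Function.Exact (d 0) ε
  surj : Function.Surjective ε

/-- Projective dimension, as the least length of a free resolution. -/
noncomputable def projDim (A : Type*) [CommRing A] (M : Type*) [AddCommGroup M]
    [Module A M] : ℕ∞ :=
  sInf {e : ℕ∞ | ∃ k : ℕ, e = (k : ℕ∞) ∧
    ∃ R : FreeRes A M, ∀ i : ℕ, k < i → IsEmpty (R.ι i)}

/-- The height of an ideal: the infimum of the heights of primes containing it. -/
noncomputable def idealHeight {A : Type*} [CommRing A] (I : Ideal A) : ℕ∞ :=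
  ⨅ (p : PrimeSpectrum A) (_ : I ≤ p.asIdeal), Order.height p

/-- The minimal number of generators of an ideal. -/
noncomputable def minGens {A : Type*} [CommRing A] (I : Ideal A) : ℕ :=
  sInf {k : ℕ | ∃ g : Fin k → A, I = Ideal.span (Set.range g)}

section partP1
open CategoryTheory

/-- pd < n -/
def pdLT (R : Type) [CommRing R] (M : Type) [AddCommGroup M] [Module R M] (n : ℕ) : Prop :=
  HasProjectiveDimensionLT (ModuleCat.of R M) n

section pd
variable {R : Type} [CommRing R] {M N : Type} [AddCommGroup M] [Module R M]
  [AddCommGroup N] [Module R N]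

lemma pdLT_mono {n m : ℕ} (h : pdLT R M n) (hnm : n ≤ m) : pdLT R M m := by
  have : HasProjectiveDimensionLT (ModuleCat.of R M) n := h
  exact hasProjectiveDimensionLT_of_ge _ n m hnm

lemma pdLT_surj {n : ℕ} (g : M →ₗ[R] N) (hg : Function.Surjective g)
    (h1 : pdLT R (LinearMap.ker g) n) (h2 : pdLT R M (n + 1)) : pdLT R N (n + 1) :=
  (LinearMap.shortExact_shortComplexKer hg).hasProjectiveDimensionLT_X₃ n h1 h2

lemma pdLT_ker {n : ℕ} (g : M →ₗ[R] N) (hg : Function.Surjective g)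
    (h2 : pdLT R M n) (h3 : pdLT R N (n + 1)) : pdLT R (LinearMap.ker g) n :=
  (LinearMap.shortExact_shortComplexKer hg).hasProjectiveDimensionLT_X₁ n h2 h3

lemma pdLT_zero_iff : pdLT R M 0 ↔ Subsingleton M := by
  unfold pdLT
  rw [hasProjectiveDimensionLT_zero_iff_isZero, ModuleCat.isZero_iff_subsingleton]

lemma pdLT_one_iff : pdLT R M 1 ↔ Module.Projective R M := by
  unfold pdLT
  rw [← projective_iff_hasProjectiveDimensionLT_one, IsProjective.iff_projective]

lemma pdLT_proj [Module.Projective R M] (n : ℕ) : pdLT R M (n + 1) :=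
  pdLT_mono (pdLT_one_iff.2 ‹_›) (by omega)

lemma pdLT_retract {n : ℕ} (i : N →ₗ[R] M) (s : M →ₗ[R] N) (h : s.comp i = LinearMap.id)
    (hM : pdLT R M n) : pdLT R N n := by
  have : HasProjectiveDimensionLT (ModuleCat.of R M) n := hM
  let r : Retract (ModuleCat.of R N) (ModuleCat.of R M) :=
    ⟨ModuleCat.ofHom i, ModuleCat.ofHom s, by ext x; exact LinearMap.congr_fun h x⟩
  exact r.hasProjectiveDimensionLT n

lemma pdLT_equiv {n : ℕ} (e : M ≃ₗ[R] N) (hM : pdLT R M n) : pdLT R N n :=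
  pdLT_retract e.symm.toLinearMap e.toLinearMap (by ext; simp) hM

/-- cover by a free module -/
lemma pdLT_succ_free {n : ℕ} (hM : pdLT R M (n + 2)) :
    pdLT R (LinearMap.ker (Finsupp.linearCombination R (id : M → M))) (n + 1) :=
  pdLT_ker _ (Finsupp.linearCombination_id_surjective R M) (pdLT_proj n) hM

lemma lT_ex {R S M N : Type} [CommRing R] [CommRing S] [Algebra R S] [AddCommGroup M] [Module R M]
    [AddCommGroup N] [Module R N] (g : M →ₗ[R] N) (hg : Function.Surjective g) :
    Function.Exact ((LinearMap.ker g).subtype.baseChange S) (g.baseChange S) :=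
  lTensor_exact S (LinearMap.exact_subtype_ker_map g) hg

lemma pdLT_baseChange (S : Type) [CommRing S] [Algebra R S] [Module.Flat R S] (n : ℕ)
    (hM : pdLT R M n) : pdLT S (TensorProduct R S M) n := by
  induction n using Nat.twoStepInduction generalizing M with
  | zero =>
    rw [pdLT_zero_iff] at *
    infer_instance
  | one =>
    rw [pdLT_one_iff] at *
    infer_instance
  | more n _ ih =>
    have h1 := ih (pdLT_succ_free hM)
    set g := Finsupp.linearCombination R (id : M → M)
    have hg : Function.Surjective g := Finsupp.linearCombination_id_surjective R M
    refine pdLT_surj (g.baseChange S) (LinearMap.lTensor_surjective S hg) ?_ (pdLT_proj _)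
    refine pdLT_equiv ?_ h1
    have hex : Function.Exact ((LinearMap.ker g).subtype.baseChange S) (g.baseChange S) :=
      by
      exact lT_ex g hg
    have hinj : Function.Injective ((LinearMap.ker g).subtype.baseChange S) :=
      Module.Flat.lTensor_preserves_injective_linearMap _ (Submodule.injective_subtype _)
    exact (LinearEquiv.ofInjective _ hinj).trans
      (LinearEquiv.ofEq _ _ (LinearMap.exact_iff.1 hex).symm)

end pd

lemma pdLT_restrict {R S : Type} [CommRing R] [CommRing S] [Algebra R S] [Module.Free R S]
    (n : ℕ) {M : Type} [AddCommGroup M] [Module R M] [Module S M] [IsScalarTower R S M]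
    (hM : pdLT S M n) : pdLT R M n := by
  induction n using Nat.twoStepInduction generalizing M with
  | zero =>
    rw [pdLT_zero_iff] at *
    exact hM
  | one =>
    rw [pdLT_one_iff] at *
    obtain ⟨s, hs⟩ := hM
    exact Module.Projective.of_split (s.restrictScalars R)
      ((Finsupp.linearCombination S (id : M → M)).restrictScalars R) (by ext x; exact hs x)
  | more n _ ih =>
    have h1 := ih (pdLT_succ_free hM)
    set g := Finsupp.linearCombination S (id : M → M)
    have hg : Function.Surjective g := Finsupp.linearCombination_id_surjective S M
    exact pdLT_surj (g.restrictScalars R) hg h1 (pdLT_proj _)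

section res
variable {A : Type} [CommRing A] {M : Type} [AddCommGroup M] [Module A M]

/-- the swindle -/
noncomputable def swindle {P F : Type} [AddCommGroup P] [Module A P] [AddCommGroup F] [Module A F]
    (i : P →ₗ[A] F) (s : F →ₗ[A] P) (h : ∀ x, s (i x) = x) : (P × (ℕ →₀ F)) ≃ₗ[A] (ℕ →₀ F) :=
  LinearEquiv.ofLinearMap
    (LinearMap.coprod (Finsupp.lsingle 0 ∘ₗ i)
      (Finsupp.mapRange.linearMap (LinearMap.id - i ∘ₗ s) +
        Finsupp.lmapDomain F A Nat.succ ∘ₗ Finsupp.mapRange.linearMap (i ∘ₗ s)))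
    (LinearMap.prod (s ∘ₗ Finsupp.lapply 0)
      (Finsupp.mapRange.linearMap (LinearMap.id - i ∘ₗ s) +
        Finsupp.mapRange.linearMap (i ∘ₗ s) ∘ₗ Finsupp.lcomapDomain Nat.succ Nat.succ_injective))
    (by
      refine LinearMap.ext fun x => ?_
      ext j
      rcases j with _ | j <;>
        simp [Finsupp.mapDomain_of_notMem_range, h,
          Finsupp.mapDomain_apply Nat.succ_injective, Finsupp.lcomapDomain])
    (by
      refine LinearMap.ext fun x => ?_
      obtain ⟨p, x⟩ := x
      refine Prod.ext ?_ (Finsupp.ext fun j => ?_)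
      · simp [Finsupp.mapDomain_of_notMem_range, h]
      · rcases j with _ | j <;>
        simp [Finsupp.mapDomain_of_notMem_range, h,
          Finsupp.mapDomain_apply Nat.succ_injective, Finsupp.lcomapDomain])

/-- length bounded -/
def HasRes (A : Type) [CommRing A] (M : Type) [AddCommGroup M] [Module A M] (k : ℕ) : Prop :=
  ∃ R : FreeRes A M, ∀ i : ℕ, k < i → IsEmpty (R.ι i)

/-- shift -/
noncomputable def FreeRes.shift (R : FreeRes A M) : FreeRes A (LinearMap.ker R.ε) where
  ι i := R.ι (i + 1)
  d i := R.d (i + 1)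
  ε := (R.d 0).codRestrict _ fun x => (R.exact_ε _).2 ⟨x, rfl⟩
  exact_d i := R.exact_d (i + 1)
  exact_ε := by
    intro x
    rw [← R.exact_d 0 x, Subtype.ext_iff]
    rfl
  surj := by
    rintro ⟨x, hx⟩
    obtain ⟨y, rfl⟩ := (R.exact_ε x).1 hx
    exact ⟨y, rfl⟩

lemma hasRes_pdLT {k : ℕ} (h : HasRes A M k) : pdLT A M (k + 1) := by
  induction k generalizing M with
  | zero =>
    obtain ⟨R, hR⟩ := h
    have := hR 1 (by omega)
    rw [pdLT_one_iff]
    have hinj : Function.Injective R.ε := by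
      rw [injective_iff_map_eq_zero]
      intro x hx
      obtain ⟨y, rfl⟩ := (R.exact_ε x).1 hx
      have : y = 0 := Finsupp.ext fun i => (this.false i).elim
      rw [this, map_zero]
    exact Module.Projective.of_equiv (LinearEquiv.ofBijective R.ε ⟨hinj, R.surj⟩)
  | succ k ih =>
    obtain ⟨R, hR⟩ := h
    exact pdLT_surj R.ε R.surj (ih ⟨R.shift, fun i hi => hR (i + 1) (by omega)⟩) (pdLT_proj _)

/-- resolution of a free module -/
noncomputable def FreeRes.ofEquiv {κ : Type} (e : (κ →₀ A) ≃ₗ[A] M) : FreeRes A M where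
  ι i := match i with
    | 0 => κ
    | _ + 1 => Empty
  d i := 0
  ε := e.toLinearMap
  exact_d i := by
    intro x
    have : x = 0 := Finsupp.ext fun i => i.elim
    subst this
    simp
  exact_ε := by
    intro x
    constructor
    · intro hx
      exact ⟨0, by rw [map_zero]; exact (e.injective (hx.trans (map_zero e).symm)).symm⟩
    · rintro ⟨y, rfl⟩
      exact map_zero e
  surj := e.surjective

/-- cons -/
noncomputable def FreeRes.cons {κ : Type} (ε : (κ →₀ A) →ₗ[A] M) (hs : Function.Surjective ε)
    (R : FreeRes A (LinearMap.ker ε)) : FreeRes A M where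
  ι i := match i with
    | 0 => κ
    | i + 1 => R.ι i
  d i := match i with
    | 0 => (LinearMap.ker ε).subtype ∘ₗ R.ε
    | i + 1 => R.d i
  ε := ε
  exact_d i := match i with
    | 0 => by
      intro x
      rw [← R.exact_ε x]
      simp
    | i + 1 => R.exact_d i
  exact_ε := by
    intro x
    constructor
    · intro hx
      obtain ⟨y, hy⟩ := R.surj ⟨x, hx⟩
      exact ⟨y, by simp [hy]⟩
    · rintro ⟨y, rfl⟩
      exact (R.ε y).2
  surj := hs

lemma swindle' (P : Type) [AddCommGroup P] [Module A P] [hP : Module.Projective A P] :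
    Nonempty ((ℕ × P →₀ A) ≃ₗ[A] P × (ℕ × P →₀ A)) := by
  obtain ⟨s, hs⟩ := hP
  have e1 : (P × (ℕ →₀ (P →₀ A))) ≃ₗ[A] (ℕ →₀ (P →₀ A)) :=
    swindle s (Finsupp.linearCombination A id) hs
  let c : (ℕ × P →₀ A) ≃ₗ[A] (ℕ →₀ (P →₀ A)) := Finsupp.curryLinearEquiv A
  exact ⟨c ≪≫ₗ e1.symm ≪≫ₗ (LinearEquiv.prodCongr (LinearEquiv.refl A P) c.symm)⟩

/-- kernel of a projection -/
noncomputable def kerFst {E F G N : Type} [AddCommGroup E] [Module A E] [AddCommGroup F] [Module A F]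
    [AddCommGroup G] [Module A G] [AddCommGroup N] [Module A N] (g : F →ₗ[A] N)
    (f : E ≃ₗ[A] F × G) :
    LinearMap.ker (g ∘ₗ LinearMap.fst _ _ _ ∘ₗ f.toLinearMap) ≃ₗ[A] LinearMap.ker g × G where
  toFun x := (⟨(f x.1).1, x.2⟩, (f x.1).2)
  invFun y := ⟨f.symm (y.1.1, y.2), by simp⟩
  map_add' x y := by ext <;> simp
  map_smul' x y := by ext <;> simp
  left_inv x := by ext; simp
  right_inv y := by ext <;> simp

lemma hasRes_of_pdLT {k : ℕ} (h : pdLT A M (k + 2)) : HasRes A M (k + 1) := by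
  induction k generalizing M with
  | succ k ih =>
    obtain ⟨R, hR⟩ := ih (pdLT_succ_free h)
    refine ⟨FreeRes.cons _ (Finsupp.linearCombination_id_surjective A M) R, fun i hi => ?_⟩
    rcases i with _ | i
    · omega
    · exact hR i (by omega)
  | zero =>
    have h1 := pdLT_succ_free h
    rw [zero_add, pdLT_one_iff] at h1
    set g := Finsupp.linearCombination A (id : M → M)
    have hg : Function.Surjective g := Finsupp.linearCombination_id_surjective A M
    let P := LinearMap.ker g
    obtain ⟨e1⟩ := swindle' (A := A) P
    let f : (M ⊕ (ℕ × P) →₀ A) ≃ₗ[A] (M →₀ A) × (ℕ × P →₀ A) :=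
      Finsupp.sumFinsuppLEquivProdFinsupp A
    let ε : (M ⊕ (ℕ × P) →₀ A) →ₗ[A] M := g ∘ₗ LinearMap.fst _ _ _ ∘ₗ f.toLinearMap
    have hε : Function.Surjective ε :=
      hg.comp (Prod.fst_surjective.comp f.surjective)
    let e2 : LinearMap.ker ε ≃ₗ[A] P × (ℕ × P →₀ A) := kerFst g f
    let e3 : (ℕ × P →₀ A) ≃ₗ[A] LinearMap.ker ε :=
      e1 ≪≫ₗ e2.symm
    refine ⟨FreeRes.cons ε hε (FreeRes.ofEquiv e3), fun i hi => ?_⟩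
    rcases i with _ | _ | i
    · omega
    · omega
    · exact inferInstanceAs (IsEmpty Empty)

lemma projDim_eq_iff_aux {A : Type} [CommRing A] {M : Type} [AddCommGroup M] [Module A M] {k : ℕ}
    (h : projDim A M = k) : HasRes A M k := by
  have hne : {e : ℕ∞ | ∃ k : ℕ, e = (k : ℕ∞) ∧
    ∃ R : FreeRes A M, ∀ i : ℕ, k < i → IsEmpty (R.ι i)}.Nonempty := by
    by_contra hcon
    rw [Set.not_nonempty_iff_eq_empty] at hcon
    rw [projDim, hcon, sInf_empty] at h
    exact ENat.top_ne_natCast _ h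
  obtain ⟨k', hk', hR⟩ := csInf_mem hne
  have : k' = k := by
    have h2 : (k' : ℕ∞) = k := by rw [← h, ← hk']; rfl
    exact_mod_cast h2
  subst this
  exact hR

lemma projDim_le {A : Type} [CommRing A] {M : Type} [AddCommGroup M] [Module A M] {k : ℕ}
    (h : HasRes A M k) : projDim A M ≤ k := sInf_le ⟨k, rfl, h⟩

/-- characterise -/
lemma projDim_eq_of {A : Type} [CommRing A] {M : Type} [AddCommGroup M] [Module A M] {k : ℕ}
    (h1 : 1 ≤ k) (h : pdLT A M (k + 1)) (h' : ¬ pdLT A M k) : projDim A M = k := by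
  apply le_antisymm
  · obtain ⟨k, rfl⟩ := Nat.exists_eq_add_of_le' h1
    exact projDim_le (hasRes_of_pdLT h)
  · refine le_sInf ?_
    rintro _ ⟨j, rfl, hj⟩
    by_contra hlt
    push Not at hlt
    have hlt : j < k := by exact_mod_cast hlt
    exact h' (pdLT_mono (hasRes_pdLT hj) (by omega))

/-- hypothesis form -/
lemma pdLT_of_projDim {A : Type} [CommRing A] {M : Type} [AddCommGroup M] [Module A M] {k : ℕ}
    (h : projDim A M = k) : pdLT A M (k + 1) ∧ (2 ≤ k → ¬ pdLT A M k) := by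
  refine ⟨hasRes_pdLT (projDim_eq_iff_aux h), fun hk hp => ?_⟩
  obtain ⟨k, rfl⟩ := Nat.exists_eq_add_of_le' hk
  have := projDim_le (hasRes_of_pdLT hp)
  rw [h] at this
  have : k + 2 ≤ k + 1 := by exact_mod_cast this
  omega

end res
end partP1

section partP2
/-- Koszul index types -/
def KT : ℕ → ℤ → Type
  | 0, i => PLift (i = 0)
  | n + 1, i => KT n i ⊕ KT n (i - 1)

instance KT.finite : ∀ (n : ℕ) (i : ℤ), Finite (KT n i)
  | 0, i => inferInstanceAs (Finite (PLift (i = 0)))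
  | n + 1, i => by
    have := KT.finite n i
    have := KT.finite n (i - 1)
    exact inferInstanceAs (Finite (KT n i ⊕ KT n (i - 1)))

lemma KT.isEmpty_neg : ∀ (n : ℕ) (i : ℤ), i < 0 → IsEmpty (KT n i)
  | 0, i, h => ⟨fun x => by have := PLift.down x; omega⟩
  | n + 1, i, h => by
    have := KT.isEmpty_neg n i h
    have := KT.isEmpty_neg n (i - 1) (by omega)
    exact inferInstanceAs (IsEmpty (KT n i ⊕ KT n (i - 1)))

lemma KT.isEmpty_big : ∀ (n : ℕ) (i : ℤ), (n : ℤ) < i → IsEmpty (KT n i)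
  | 0, i, h => ⟨fun x => by have := PLift.down x; simp at h; omega⟩
  | n + 1, i, h => by
    have := KT.isEmpty_big n i (by push_cast at h; omega)
    have := KT.isEmpty_big n (i - 1) (by push_cast at h; omega)
    exact inferInstanceAs (IsEmpty (KT n i ⊕ KT n (i - 1)))

/-- degree zero generator -/
def KT.z : ∀ (n : ℕ) (i : ℤ), i = 0 → KT n i
  | 0, _, h => PLift.up h
  | n + 1, i, h => Sum.inl (KT.z n i h)

/-- top generator -/
def KT.top : ∀ (n : ℕ) (i : ℤ), i = n → KT n i
  | 0, _, h => PLift.up (by simpa using h)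
  | n + 1, i, h => Sum.inr (KT.top n (i - 1) (by push_cast at h; omega))

lemma KT.sub : ∀ (n : ℕ) (i : ℤ) (h : i = 0) (x : KT n i), x = KT.z n i h
  | 0, _, h, x => rfl
  | n + 1, i, h, x => by
    have he := KT.isEmpty_neg n (i - 1) (by omega)
    rcases x with x | x
    · exact congrArg Sum.inl (KT.sub n i h x)
    · exact (he.false x).elim

section kos
variable {R : Type} [CommRing R] {M : Type} [AddCommGroup M] [Module R M]

/-- left restriction -/
def KT.resL {M : Type} {n : ℕ} {i : ℤ} (w : KT (n + 1) i → M) : KT n i → M := fun t => w (Sum.inl t)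

/-- right restriction -/
def KT.resR {M : Type} {n : ℕ} {i : ℤ} (w : KT (n + 1) i → M) : KT n (i - 1) → M :=
  fun t => w (Sum.inr t)

/-- glue -/
def KT.mk {M : Type} {n : ℕ} {i : ℤ} (a : KT n i → M) (b : KT n (i - 1) → M) : KT (n + 1) i → M :=
  fun t => Sum.elim a b t

lemma KT.ext {M : Type} {n : ℕ} {i : ℤ} {v w : KT (n + 1) i → M}
    (h1 : KT.resL v = KT.resL w) (h2 : KT.resR v = KT.resR w) : v = w := by
  funext s
  rcases s with s | s
  · exact congrFun h1 s
  · exact congrFun h2 s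

open KT

section resl
variable {n : ℕ} {i : ℤ}
lemma resL_mk {M : Type} (a : KT n i → M) (b : KT n (i - 1) → M) : resL (KT.mk a b) = a := rfl
lemma resR_mk {M : Type} (a : KT n i → M) (b : KT n (i - 1) → M) : resR (KT.mk a b) = b := rfl
lemma resL_add (v w : KT (n + 1) i → M) : resL (v + w) = resL v + resL w := rfl
lemma resR_add (v w : KT (n + 1) i → M) : resR (v + w) = resR v + resR w := rfl
lemma resL_neg (v : KT (n + 1) i → M) : resL (- v) = - resL v := rfl
lemma resR_neg (v : KT (n + 1) i → M) : resR (- v) = - resR v := rfl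
lemma resL_zero : resL (0 : KT (n + 1) i → M) = 0 := rfl
lemma resR_zero : resR (0 : KT (n + 1) i → M) = 0 := rfl
lemma resL_smul (c : R) (v : KT (n + 1) i → M) : resL (c • v) = c • resL v := rfl
lemma resR_smul (c : R) (v : KT (n + 1) i → M) : resR (c • v) = c • resR v := rfl
end resl

/-- Koszul differential -/
def kd (f : ℕ → R) : ∀ (n : ℕ) (i : ℤ), (KT n i → M) → (KT n (i - 1) → M)
  | 0, _, _ => fun _ => 0
  | n + 1, i, w => KT.mk (kd f n i (resL w) + f n • resR w) (- kd f n (i - 1) (resR w))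

lemma kd_inl (f : ℕ → R) (n : ℕ) (i : ℤ) (w : KT (n + 1) i → M) :
    resL (kd f (n + 1) i w) = kd f n i (resL w) + f n • (resR w) := rfl

lemma kd_inr (f : ℕ → R) (n : ℕ) (i : ℤ) (w : KT (n + 1) i → M) :
    resR (kd f (n + 1) i w) = - kd f n (i - 1) (resR w) := rfl

lemma kd_nat {R' : Type} [CommRing R'] {M' : Type} [AddCommGroup M'] [Module R' M']
    (f : ℕ → R) (f' : ℕ → R') (g g' : M →+ M') (n : ℕ)
    (h : ∀ j < n, ∀ m, f' j • g m = g' (f j • m)) (i : ℤ) (w : KT n i → M) (s) :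
    kd f' n i (fun t => g (w t)) s = g' (kd f n i w s) := by
  induction n generalizing i with
  | zero => simp [kd]
  | succ n ih =>
    rcases s with s | s
    · change kd f' n i (fun t => g (resL w t)) s + f' n • g (resR w s) =
        g' (kd f n i (resL w) s + f n • resR w s)
      rw [ih (fun j hj => h j (by omega)) i (resL w) s, h n (by omega), map_add]
    · change - kd f' n (i - 1) (fun t => g (resR w t)) s = g' (- kd f n (i - 1) (resR w) s)
      rw [ih (fun j hj => h j (by omega)) (i - 1) (resR w) s, map_neg]

lemma kd_add (f : ℕ → R) (n : ℕ) (i : ℤ) (v w : KT n i → M) :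
    kd f n i (v + w) = kd f n i v + kd f n i w := by
  induction n generalizing i with
  | zero => funext s; simp [kd]
  | succ n ih =>
    apply KT.ext
    · simp only [resL_add, resR_add, kd_inl, ih, smul_add]
      abel
    · simp only [resR_add, kd_inr, ih]
      abel

lemma kd_smul (f : ℕ → R) (n : ℕ) (i : ℤ) (c : R) (w : KT n i → M) :
    kd f n i (c • w) = c • kd f n i w := by
  induction n generalizing i with
  | zero => funext s; simp [kd]
  | succ n ih =>
    apply KT.ext
    · simp only [resL_smul, resR_smul, kd_inl, ih, smul_add, smul_comm c]
    · simp only [resR_smul, kd_inr, ih, smul_neg]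

/-- linear version -/
def kdl (f : ℕ → R) (n : ℕ) (i : ℤ) : (KT n i → M) →ₗ[R] (KT n (i - 1) → M) where
  toFun := kd f n i
  map_add' := kd_add f n i
  map_smul' := kd_smul f n i

lemma kd_zero (f : ℕ → R) (n : ℕ) (i : ℤ) : kd f n i (0 : KT n i → M) = 0 :=
  map_zero (kdl f n i)

lemma kd_neg (f : ℕ → R) (n : ℕ) (i : ℤ) (w : KT n i → M) : kd f n i (-w) = - kd f n i w :=
  map_neg (kdl f n i) w

lemma kd_sub (f : ℕ → R) (n : ℕ) (i : ℤ) (v w : KT n i → M) :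
    kd f n i (v - w) = kd f n i v - kd f n i w :=
  map_sub (kdl f n i) v w

lemma kd_kd (f : ℕ → R) (n : ℕ) (i : ℤ) (w : KT n i → M) :
    kd f n (i - 1) (kd f n i w) = 0 := by
  induction n generalizing i with
  | zero => rfl
  | succ n ih =>
    apply KT.ext
    · simp only [kd_inl, kd_inr, kd_add, kd_smul, ih, smul_neg, zero_add, add_neg_cancel, resL_zero]
    · simp only [kd_inr, kd_neg, ih, neg_zero, resR_zero]

lemma kd_anti (f y : ℕ → R) (n : ℕ) (i : ℤ) (w : KT n i → M) :
    kd f n (i - 1) (kd y n i w) = - kd y n (i - 1) (kd f n i w) := by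
  induction n generalizing i with
  | zero => funext s; simp [kd]
  | succ n ih =>
    apply KT.ext
    · simp only [kd_inl, kd_inr, kd_add, kd_smul, ih i, smul_neg, resL_neg]
      abel
    · simp only [kd_inr, kd_neg, ih (i - 1), resR_neg]

/-- homotopy -/
def kh (j : ℕ) : ∀ (n : ℕ) (i : ℤ), (KT n (i - 1) → M) → (KT n i → M)
  | 0, _, _ => fun _ => 0
  | n + 1, i, w => KT.mk (if j = n then 0 else kh j n i (resL w))
      (if j = n then resL w else - kh j n (i - 1) (resR w))

lemma kh_inl_eq (n : ℕ) (i : ℤ) (w : KT (n + 1) (i - 1) → M) : resL (kh n (n + 1) i w) = 0 := by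
  simp [kh, resL_mk]
lemma kh_inr_eq (n : ℕ) (i : ℤ) (w : KT (n + 1) (i - 1) → M) :
    resR (kh n (n + 1) i w) = resL w := by
  simp [kh, resR_mk]
lemma kh_inl_ne {j n : ℕ} (h : j ≠ n) (i : ℤ) (w : KT (n + 1) (i - 1) → M) :
    resL (kh j (n + 1) i w) = kh j n i (resL w) := by
  simp [kh, resL_mk, h]
lemma kh_inr_ne {j n : ℕ} (h : j ≠ n) (i : ℤ) (w : KT (n + 1) (i - 1) → M) :
    resR (kh j (n + 1) i w) = - kh j n (i - 1) (resR w) := by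
  simp [kh, resR_mk, h]

lemma kh_add (j n : ℕ) (i : ℤ) (v w : KT n (i - 1) → M) :
    kh j n i (v + w) = kh j n i v + kh j n i w := by
  induction n generalizing i with
  | zero => funext s; simp [kh]
  | succ n ih =>
    by_cases h : j = n
    · subst h
      apply KT.ext
      · simp only [resL_add, kh_inl_eq, add_zero]
      · simp only [resR_add, kh_inr_eq, resL_add]
    · apply KT.ext
      · simp only [resL_add, kh_inl_ne h, ih]
      · simp only [resR_add, kh_inr_ne h, ih, neg_add]

lemma kh_smul (j n : ℕ) (i : ℤ) (c : R) (v : KT n (i - 1) → M) :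
    kh j n i (c • v) = c • kh j n i v := by
  induction n generalizing i with
  | zero => funext s; simp [kh]
  | succ n ih =>
    by_cases h : j = n
    · subst h
      apply KT.ext
      · simp only [resL_smul, kh_inl_eq, smul_zero]
      · simp only [resR_smul, kh_inr_eq, resL_smul]
    · apply KT.ext
      · simp only [resL_smul, kh_inl_ne h, ih]
      · simp only [resR_smul, kh_inr_ne h, ih, smul_neg]

lemma kh_neg (j n : ℕ) (i : ℤ) (v : KT n (i - 1) → M) :
    kh j n i (-v) = - kh j n i v := by
  have := kh_smul j n i (-1 : ℤ) v
  simpa using this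

lemma kd_kh (f : ℕ → R) (j n : ℕ) (hj : j < n) (i : ℤ) (w : KT n (i - 1) → M) :
    kd f n i (kh j n i w) + kh j n (i - 1) (kd f n (i - 1) w) = f j • w := by
  induction n generalizing i with
  | zero => omega
  | succ n ih =>
    by_cases hjn : j = n
    · subst hjn
      apply KT.ext
      · simp only [resL_add, kd_inl, kh_inl_eq, kh_inr_eq, kd_zero, resL_smul, zero_add, add_zero]
      · simp only [resR_add, kd_inr, kd_inl, kh_inr_eq, resR_smul]
        abel
    · apply KT.ext
      · simp only [resL_add, kd_inl, kh_inl_ne hjn, kh_inr_ne hjn, resL_smul]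
        rw [← ih (by omega), kh_add, kh_smul, smul_neg]
        abel
      · simp only [resR_add, kd_inr, kh_inr_ne hjn, resR_smul]
        rw [← ih (by omega), kd_neg, kh_neg]
        abel

/-- `H_{i-1}(f;M)=0` -/
def KEx (f : ℕ → R) (M : Type) [AddCommGroup M] [Module R M] (n : ℕ) (i : ℤ) : Prop :=
  ∀ z : KT n (i - 1) → M, kd f n (i - 1) z = 0 → ∃ v : KT n i → M, kd f n i v = z

lemma kd_ann (f : ℕ → R) (n : ℕ) (i : ℤ) (a : R) (ha : a ∈ Ideal.span (f '' {j | j < n}))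
    (z : KT n (i - 1) → M) (hz : kd f n (i - 1) z = 0) : ∃ v : KT n i → M, kd f n i v = a • z := by
  let Q : Ideal R :=
    { carrier := {a | ∃ v : KT n i → M, kd f n i v = a • z}
      add_mem' := by
        rintro a b ⟨v, hv⟩ ⟨w, hw⟩
        exact ⟨v + w, by rw [kd_add, hv, hw, add_smul]⟩
      zero_mem' := ⟨0, by rw [kd_zero, zero_smul]⟩
      smul_mem' := by
        rintro c a ⟨v, hv⟩
        exact ⟨c • v, by rw [kd_smul, hv, smul_eq_mul, mul_smul]⟩ }
  have : Ideal.span (f '' {j | j < n}) ≤ Q := by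
    rw [Ideal.span_le]
    rintro _ ⟨j, hj, rfl⟩
    refine ⟨kh j n i z, ?_⟩
    rw [← kd_kh f j n hj, hz]
    have := kh_smul j n (i - 1) (0 : R) (0 : KT n (i - 1 - 1) → M)
    rw [zero_smul, zero_smul] at this
    rw [this, add_zero]
  exact this ha

open RingTheory.Sequence in
lemma kd_depth (f : ℕ → R) (n : ℕ) (rs : List R) (hrs : ∀ a ∈ rs, a ∈ Ideal.span (f '' {j | j < n}))
    (M : Type) [AddCommGroup M] [Module R M]
    (hreg : IsWeaklyRegular M rs) (i : ℤ) (hi : (n : ℤ) - rs.length < i - 1) : KEx f M n i := by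
  induction rs generalizing M i with
  | nil =>
    have := KT.isEmpty_big n (i - 1) (by simpa using hi)
    exact fun z _ => ⟨0, funext fun s => (this.false s).elim⟩
  | cons a rs ih =>
    intro z hz
    rw [isWeaklyRegular_cons_iff] at hreg
    obtain ⟨w, hw⟩ := kd_ann f n i a (hrs a (by simp)) z hz
    obtain ⟨k, rfl⟩ : ∃ k, i = k - 1 := ⟨i + 1, by ring⟩
    let q : M →ₗ[R] QuotSMulTop a M := Submodule.mkQ _
    have hq : Function.Surjective q := Submodule.mkQ_surjective _
    have hker : ∀ x, q x = 0 → ∃ u, a • u = x := by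
      intro x hx
      rw [Submodule.mkQ_apply, Submodule.Quotient.mk_eq_zero] at hx
      obtain ⟨u, -, hu⟩ := hx
      exact ⟨u, hu⟩
    have hqa : ∀ x, q (a • x) = 0 := by
      intro x
      rw [Submodule.mkQ_apply, Submodule.Quotient.mk_eq_zero]
      exact ⟨x, trivial, rfl⟩
    have hn : ∀ i (v : KT n i → M), kd f n i (fun t => q (v t)) = fun s => q (kd f n i v s) :=
      fun i v => funext fun s => kd_nat f f q.toAddMonoidHom q.toAddMonoidHom n
        (fun j _ m => (map_smul q _ _).symm) i v s
    obtain ⟨v, hv⟩ := ih (fun b hb => hrs b (by simp [hb])) (QuotSMulTop a M) hreg.2 k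
      (by simp at hi; omega) (fun t => q (w t)) (by
        rw [hn, hw]
        funext s
        exact hqa _)
    choose v' hv' using fun t => hq (v t)
    have hv'' : v = fun t => q (v' t) := funext fun t => (hv' t).symm
    rw [hv'', hn] at hv
    have : ∀ s, ∃ u, a • u = w s - kd f n k v' s := by
      intro s
      apply hker
      rw [map_sub, sub_eq_zero]
      exact (congrFun hv s).symm
    choose u hu using this
    refine ⟨u, ?_⟩
    have hu : w = kd f n k v' + a • u := by
      funext s
      simp [hu]
    rw [hu, kd_add, kd_kd, zero_add, kd_smul] at hw
    funext s
    exact hreg.1 (congrFun hw s)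

lemma kd_one (n : ℕ) (i : ℤ) (hi : i - 1 = 0) (w : KT n i → M) :
    ∃ c : ℕ → M, ∀ f : ℕ → R, kd f n i w (KT.z n _ hi) = ∑ j ∈ Finset.range n, f j • c j := by
  induction n with
  | zero => exact ⟨0, fun f => by simp [kd]⟩
  | succ n ih =>
    obtain ⟨c, hc⟩ := ih (resL w)
    refine ⟨fun j => if j = n then resR w (KT.z n _ hi) else c j, fun f => ?_⟩
    rw [Finset.sum_range_succ]
    simp only [if_true]
    change kd f n i (resL w) (KT.z n _ hi) + f n • resR w (KT.z n _ hi) = _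
    rw [hc]
    congr 1
    refine Finset.sum_congr rfl fun j hj => ?_
    rw [if_neg (Finset.mem_range.1 hj).ne]

lemma kd_one' (n : ℕ) (i : ℤ) (hi : i - 1 = 0) (c : ℕ → M) :
    ∃ w : KT n i → M, ∀ f : ℕ → R,
      kd f n i w (KT.z n _ hi) = ∑ j ∈ Finset.range n, f j • c j := by
  induction n with
  | zero => exact ⟨0, fun f => by simp [kd]⟩
  | succ n ih =>
    obtain ⟨w, hw⟩ := ih
    refine ⟨KT.mk w (fun _ => c n), fun f => ?_⟩
    rw [Finset.sum_range_succ, ← hw]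
    rfl

lemma kd_allzero (f : ℕ → R) (n : ℕ) (hf : ∀ j < n, ∀ m : M, f j • m = 0) (i : ℤ)
    (w : KT n i → M) : kd f n i w = 0 := by
  funext s
  have := kd_nat f f (AddMonoidHom.id M) 0 n (fun j hj m => by simp [hf j hj]) i w s
  simpa using this

end kos

/-- Koszul homology vanishes above the projective dimension -/
lemma kd_pd {R : Type} [CommRing R] (f : ℕ → R) (n r : ℕ)
    (hf : ∀ F : Type, ∀ [AddCommGroup F] [Module R F] [Module.Projective R F],
      ∀ i : ℤ, 1 ≤ i - 1 → KEx f F n i)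
    (M : Type) [AddCommGroup M] [Module R M] (hM : pdLT R M r) (i : ℤ) (hi : (r : ℤ) ≤ i - 1) :
    KEx f M n i := by
  induction r using Nat.twoStepInduction generalizing M i with
  | zero =>
    rw [pdLT_zero_iff] at hM
    exact fun z _ => ⟨0, funext fun s => Subsingleton.elim _ _⟩
  | one =>
    rw [pdLT_one_iff] at hM
    exact hf M i (by simpa using hi)
  | more r _ ih =>
    have h1 := pdLT_succ_free hM
    have hg : Function.Surjective (Finsupp.linearCombination R (id : M → M)) :=
      Finsupp.linearCombination_id_surjective R M
    generalize Finsupp.linearCombination R (id : M → M) = g at h1 hg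
    have hn : ∀ i (v : KT n i → (M →₀ R)), kd f n i (fun t => g (v t)) = fun s => g (kd f n i v s) :=
      fun i v => funext fun s => kd_nat f f g.toAddMonoidHom g.toAddMonoidHom n
        (fun j _ m => (map_smul g _ _).symm) i v s
    have hk : ∀ i (v : KT n i → LinearMap.ker g),
        kd f n i (fun t => (v t : M →₀ R)) = fun s => ((kd f n i v s : LinearMap.ker g) : M →₀ R) :=
      fun i v => funext fun s => kd_nat f f (LinearMap.ker g).subtype.toAddMonoidHom
        (LinearMap.ker g).subtype.toAddMonoidHom n
        (fun j _ m => rfl) i v s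
    intro z hz
    choose z' hz' using fun t => hg (z t)
    have hz'' : z = fun t => g (z' t) := funext fun t => (hz' t).symm
    rw [hz'', hn] at hz
    let c : KT n (i - 1 - 1) → LinearMap.ker g := fun s => ⟨kd f n (i - 1) z' s, congrFun hz s⟩
    obtain ⟨u, hu⟩ := ih (LinearMap.ker g) h1 (i - 1) (by push_cast at hi ⊢; omega) c (by
      funext s
      apply Subtype.ext
      rw [← congrFun (hk _ c) s]
      exact congrFun (kd_kd f n (i - 1) z') s)
    obtain ⟨v, hv⟩ := hf (M →₀ R) i (by push_cast at hi; omega) (z' - fun t => (u t : M →₀ R)) (by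
      rw [kd_sub, hk, hu]
      funext s
      simp [c])
    refine ⟨fun t => g (v t), ?_⟩
    rw [hn, hv, hz'']
    funext s
    simp
end partP2

section partP2b
open KT MvPolynomial

/-- truncation -/
noncomputable def trunc {σ B : Type} [CommRing B] (t : ℕ) :
    MvPolynomial σ B →ₗ[B] MvPolynomial σ B :=
  ∑ i ∈ Finset.range t, homogeneousComponent i

lemma coeff_trunc {σ B : Type} [CommRing B] (t : ℕ) (p : MvPolynomial σ B) (d : σ →₀ ℕ) :
    coeff d (trunc t p) = if d.degree < t then coeff d p else 0 := by
  classical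
  simp [trunc, coeff_sum, coeff_homogeneousComponent]

lemma trunc_trunc {σ B : Type} [CommRing B] (t : ℕ) (p : MvPolynomial σ B) :
    trunc t (trunc t p) = trunc t p := by
  ext d
  simp only [coeff_trunc]
  split_ifs <;> rfl

lemma trunc_C_mul {σ B : Type} [CommRing B] (t : ℕ) (b : B) (p : MvPolynomial σ B) :
    trunc t (C b * p) = C b * trunc t p := by
  rw [← smul_eq_C_mul, map_smul, smul_eq_C_mul]

lemma trunc_X_mul {σ B : Type} [CommRing B] (t : ℕ) (j : σ) (p : MvPolynomial σ B) :
    trunc (t + 1) (X j * p) = X j * trunc t p := by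
  classical
  ext d
  simp only [coeff_trunc, coeff_X_mul']
  by_cases h : j ∈ d.support
  · have hd : d = Finsupp.single j 1 + (d - Finsupp.single j 1) := by
      rw [add_tsub_cancel_of_le]
      rw [Finsupp.single_le_iff]
      exact Nat.one_le_iff_ne_zero.2 (Finsupp.mem_support_iff.1 h)
    have : d.degree = 1 + (d - Finsupp.single j 1).degree := by
      conv_lhs => rw [hd]
      rw [map_add]
      simp
    rw [if_pos h, if_pos h, this]
    congr 1
    simp only [eq_iff_iff]
    omega
  · simp [h]

lemma trunc_zero {σ B : Type} [CommRing B] (p : MvPolynomial σ B) : trunc 0 p = 0 := by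
  simp [trunc]

lemma exists_trunc {σ B : Type} [CommRing B] (p : MvPolynomial σ B) :
    ∃ t, ∀ t' ≥ t, trunc t' p = p := by
  refine ⟨p.totalDegree + 1, fun t' ht => ?_⟩
  ext d
  rw [coeff_trunc]
  split_ifs with h
  · rfl
  · by_contra hne
    have := le_totalDegree (p := p) (s := d) (by rw [mem_support_iff]; exact fun h0 => hne h0.symm)
    have h2 : d.degree = d.sum fun _ e => e := by
      rw [Finsupp.degree_apply]; rfl
    omega

lemma zacyc {σ B : Type} [CommRing B] (N : ℕ) (f : ℕ → B) (y : ℕ → MvPolynomial σ B)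
    (hy : ∀ j < N, ∃ s, y j = X s)
    (Hy : ∀ i : ℤ, 1 ≤ i - 1 → KEx y (MvPolynomial σ B) N i)
    (Hf : ∀ i : ℤ, 2 ≤ i - 1 → KEx (fun j => (C (f j) : MvPolynomial σ B)) (MvPolynomial σ B) N i)
    (i : ℤ) (hi : 1 ≤ i - 1) (z : KT N (i - 1) → MvPolynomial σ B)
    (h1 : kd (fun j => (C (f j) : MvPolynomial σ B)) N (i - 1) z = 0) (h2 : kd y N (i - 1) z = 0) :
    ∃ u : KT N i → MvPolynomial σ B, kd (fun j => (C (f j) : MvPolynomial σ B)) N i u = 0 ∧ kd y N i u = z := by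
  obtain ⟨t, ht⟩ : ∃ t, ∀ s, trunc t (z s) = z s := by
    choose T hT using fun s => exists_trunc (z s)
    obtain ⟨t, ht⟩ := Set.Finite.bddAbove (Set.finite_range T)
    exact ⟨t, fun s => hT s t (ht ⟨s, rfl⟩)⟩
  induction t generalizing z with
  | zero =>
    have : z = 0 := by
      funext s
      rw [← ht s, trunc_zero]; rfl
    exact ⟨0, kd_zero _ _ _, by rw [kd_zero, this]⟩
  | succ t ih =>
    obtain ⟨w0, hw0⟩ := Hy i hi z h2
    let w : KT N i → MvPolynomial σ B := fun s => trunc t (w0 s)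
    have hw : kd y N i w = z := by
      funext s
      rw [← ht s, ← hw0]
      refine kd_nat y y (trunc t).toAddMonoidHom (trunc (t + 1)).toAddMonoidHom N ?_ i w0 s
      intro j hj m
      obtain ⟨a, ha⟩ := hy j hj
      rw [ha]
      exact (trunc_X_mul t a m).symm
    have hfw : ∀ s, trunc t (kd (fun j => (C (f j) : MvPolynomial σ B)) N i w s) = kd (fun j => (C (f j) : MvPolynomial σ B)) N i w s := by
      intro s
      have := kd_nat (fun j => (C (f j) : MvPolynomial σ B)) (fun j => (C (f j) : MvPolynomial σ B)) (trunc t).toAddMonoidHom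
        (trunc t).toAddMonoidHom N (fun j hj m => (trunc_C_mul t (f j) m).symm) i w s
      refine this.symm.trans ?_
      congr 1
      funext s
      exact trunc_trunc t _
    obtain ⟨u, hu1, hu2⟩ := ih (kd (fun j => (C (f j) : MvPolynomial σ B)) N i w) (kd_kd _ _ _ _)
      (by rw [kd_anti, hw, h1, neg_zero]) hfw
    obtain ⟨k, rfl⟩ : ∃ k, i = k - 1 := ⟨i + 1, by ring⟩
    obtain ⟨v, hv⟩ := Hf k (by omega) u hu1
    refine ⟨w + kd y N k v, ?_, ?_⟩
    · rw [kd_add, kd_anti, hv, hu2, add_neg_cancel]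
    · rw [kd_add, kd_kd, hw, add_zero]
end partP2b

section partP3a
namespace NagataPrep
section equivT
open Polynomial MvPolynomial Ideal Nat RingHom List

variable {k : Type} [Field k] {n : ℕ} (f : MvPolynomial (Fin (n + 1)) k)
variable (v w : Fin (n + 1) →₀ ℕ)



lemma lt_up {k : Type} [Field k] {n : ℕ} {f : MvPolynomial (Fin (n + 1)) k} {v : Fin (n + 1) →₀ ℕ} (vlt : ∀ i, v i < (2 + f.totalDegree)) : ∀ l ∈ ofFn v, l < (2 + f.totalDegree) := by
  grind


/-- We construct an algebra map `nagT1 f c` which maps `X_i` into `X_i + c • X_0 ^ r_i` when `i ≠ 0`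
and `X_0` to `X_0`. -/
noncomputable abbrev nagT1 (c : k) :
    MvPolynomial (Fin (n + 1)) k →ₐ[k] MvPolynomial (Fin (n + 1)) k :=
  aeval fun i ↦ if i = 0 then X 0 else X i + c • X 0 ^ ((2 + f.totalDegree) ^ i.1)

lemma t1_comp_t1_neg (c : k) : (nagT1 f c).comp (nagT1 f (-c)) = AlgHom.id _ _ := by
  rw [comp_aeval, ← MvPolynomial.aeval_X_left]
  ext i v
  cases i using Fin.cases <;> simp

/-- `nagT1 f 1` leads to an algebra equiv `nagT f`. -/
noncomputable abbrev nagT := AlgEquiv.ofAlgHom (nagT1 f 1) (nagT1 f (-1))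
  (t1_comp_t1_neg f 1) (by simpa using t1_comp_t1_neg f (-1))

lemma sum_r_mul_ne (vlt : ∀ i, v i < (2 + f.totalDegree)) (wlt : ∀ i, w i < (2 + f.totalDegree)) (ne : v ≠ w) :
    ∑ x : Fin (n + 1), ((2 + f.totalDegree) ^ x.1) * v x ≠ ∑ x : Fin (n + 1), ((2 + f.totalDegree) ^ x.1) * w x := by
  intro h
  refine ne <| Finsupp.ext <| congrFun <| ofFn_inj.mp ?_
  apply ofDigits_inj_of_len_eq (Nat.lt_add_right f.totalDegree one_lt_two)
    (by simp) (lt_up vlt) (lt_up wlt)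
  simpa only [ofDigits_eq_sum_mapIdx, mapIdx_eq_ofFn, get_ofFn, length_ofFn,
    Fin.val_cast, mul_comm, sum_ofFn] using! h

lemma degreeOf_zero_t {a : k} (ha : a ≠ 0) : ((nagT f) (monomial v a)).degreeOf 0 =
    ∑ i : Fin (n + 1), ((2 + f.totalDegree) ^ i.1) * v i := by
  rw [← natDegree_finSuccEquiv, monomial_eq, Finsupp.prod_pow v fun a ↦ X a]
  simp only [Fin.prod_univ_succ, Fin.sum_univ_succ, map_mul, map_prod, map_pow,
    AlgEquiv.ofAlgHom_apply, MvPolynomial.aeval_C, MvPolynomial.aeval_X, if_pos, Fin.succ_ne_zero,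
    ite_false, one_smul, map_add, finSuccEquiv_X_zero, finSuccEquiv_X_succ, algebraMap_eq]
  have h (i : Fin n) :
      (Polynomial.C (X (R := k) i) + Polynomial.X ^ ((2 + f.totalDegree) ^ i.succ.1)) ^ v i.succ ≠ 0 :=
    pow_ne_zero (v i.succ) (leadingCoeff_ne_zero.mp <| by simp [add_comm, leadingCoeff_X_pow_add_C])
  rw [natDegree_mul (by simp [ha]) (mul_ne_zero (by simp) (Finset.prod_ne_zero_iff.mpr
    (fun i _ ↦ h i))), natDegree_mul (by simp) (Finset.prod_ne_zero_iff.mpr (fun i _ ↦ h i)),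
    natDegree_prod _ _ (fun i _ ↦ h i), natDegree_finSuccEquiv, degreeOf_C]
  simpa only [natDegree_pow, zero_add, natDegree_X, mul_one, Fin.val_zero, pow_zero, one_mul,
    add_right_inj] using Finset.sum_congr rfl (fun i _ ↦ by
    rw [add_comm (Polynomial.C _), natDegree_X_pow_add_C, mul_comm])

/-- `T` maps different monomials of `f` to polynomials with different degrees in `X_0`. -/
lemma degreeOf_t_ne_of_ne (hv : v ∈ f.support) (hw : w ∈ f.support) (ne : v ≠ w) :
    (nagT f <| monomial v <| coeff v f).degreeOf 0 ≠
    (nagT f <| monomial w <| coeff w f).degreeOf 0 := by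
  rw [degreeOf_zero_t _ _ <| mem_support_iff.mp hv, degreeOf_zero_t _ _ <| mem_support_iff.mp hw]
  refine sum_r_mul_ne f v w (fun i ↦ ?_) (fun i ↦ ?_) ne <;>
  exact lt_of_le_of_lt ((monomial_le_degreeOf i ‹_›).trans (degreeOf_le_totalDegree f i))
    (by lia)

lemma leadingCoeff_finSuccEquiv_t :
    (finSuccEquiv k n ((nagT f) ((monomial v) (coeff v f)))).leadingCoeff =
    algebraMap k _ (coeff v f) := by
  rw [monomial_eq, Finsupp.prod_fintype]
  · simp only [map_mul, map_prod, leadingCoeff_mul, leadingCoeff_prod]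
    rw [AlgEquiv.ofAlgHom_apply, algHom_C, algebraMap_eq, finSuccEquiv_apply,
      eval₂Hom_C, coe_comp]
    simp only [AlgEquiv.ofAlgHom_apply, Function.comp_apply, leadingCoeff_C, map_pow,
      leadingCoeff_pow, algebraMap_eq]
    have : ∀ j, ((finSuccEquiv k n) ((nagT1 f) 1 (X j))).leadingCoeff = 1 := fun j ↦ by
      by_cases h : j = 0
      · simp [h, finSuccEquiv_apply]
      · simp only [aeval_eq_bind₁, bind₁_X_right, if_neg h, one_smul, map_add, map_pow]
        obtain ⟨i, rfl⟩ := Fin.exists_succ_eq.mpr h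
        simp [finSuccEquiv_X_succ, finSuccEquiv_X_zero, add_comm]
    simp only [this, one_pow, Finset.prod_const_one, mul_one]
  exact fun i ↦ pow_zero _

/-- `T` maps `f` into some polynomial in `X_0` such that the leading coefficient is invertible. -/
lemma T_leadingcoeff_isUnit (fne : f ≠ 0) :
    IsUnit (finSuccEquiv k n (nagT f f)).leadingCoeff := by
  obtain ⟨v, vin, vs⟩ := Finset.exists_max_image f.support
    (fun v ↦ (nagT f ((monomial v) (coeff v f))).degreeOf 0) (support_nonempty.mpr fne)
  set h := fun w ↦ (MvPolynomial.monomial w) (coeff w f)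
  simp only [← natDegree_finSuccEquiv] at vs
  replace vs : ∀ x ∈ f.support \ {v}, (finSuccEquiv k n ((nagT f) (h x))).degree <
      (finSuccEquiv k n ((nagT f) (h v))).degree := by
    intro x hx
    obtain ⟨h1, h2⟩ := Finset.mem_sdiff.mp hx
    apply degree_lt_degree <| lt_of_le_of_ne (vs x h1) ?_
    simpa only [natDegree_finSuccEquiv]
      using degreeOf_t_ne_of_ne f _ _ h1 vin <| ne_of_not_mem_cons h2
  have coeff : (finSuccEquiv k n ((nagT f) (h v + ∑ x ∈ f.support \ {v}, h x))).leadingCoeff =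
      (finSuccEquiv k n ((nagT f) (h v))).leadingCoeff := by
    simp only [map_add, map_sum]
    rw [add_comm]
    apply leadingCoeff_add_of_degree_lt <| (lt_of_le_of_lt <| degree_sum_le _ _) ?_
    have h2 : h v ≠ 0 := by simpa [h] using mem_support_iff.mp vin
    replace h2 : (finSuccEquiv k n ((nagT f) (h v))) ≠ 0 := fun eq ↦ h2 <|
      by simpa only [map_eq_zero_iff _ (AlgEquiv.injective _)] using eq
    exact (Finset.sup_lt_iff <| Ne.bot_lt (fun x ↦ h2 <| degree_eq_bot.mp x)).mpr vs
  nth_rw 2 [← f.support_sum_monomial_coeff]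
  rw [Finset.sum_eq_add_sum_sdiff_singleton_of_mem vin h]
  rw [leadingCoeff_finSuccEquiv_t] at coeff
  simpa only [coeff, algebraMap_eq] using (mem_support_iff.mp vin).isUnit.map MvPolynomial.C

end equivT
end NagataPrep
end partP3a

section partP3b
open Polynomial Ideal IsLocalization

namespace HtPoly
variable {R : Type} [CommRing R] [IsNoetherianRing R]

lemma ht_le_max (p : Ideal R) [p.IsMaximal] (P : Ideal R[X])
    [P.IsPrime] [P.LiesOver p] : P.height ≤ p.height + 1 := by
  let _ : Field (R ⧸ p) := Quotient.field p
  suffices h : (P.map (Ideal.Quotient.mk (Ideal.map (algebraMap R R[X]) p))).height ≤ 1 by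
    rw [height_eq_height_add_of_liesOver_of_hasGoingDown p]
    gcongr
  let e : (R[X] ⧸ (p.map (algebraMap R R[X]))) ≃+* (R ⧸ p)[X] :=
    (polynomialQuotientEquivQuotientPolynomial p).symm
  let P' : Ideal (R ⧸ p)[X] := Ideal.map e <| P.map (Ideal.Quotient.mk <| p.map (algebraMap R R[X]))
  have : (P.map (Ideal.Quotient.mk <| p.map (algebraMap R R[X]))).IsPrime := by
    refine map_isPrime_of_surjective Quotient.mk_surjective ?_
    rw [mk_ker, LiesOver.over (P := P) (p := p)]
    exact map_comap_le
  have : P'.IsPrime := map_isPrime_of_equiv e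
  have : P'.height ≤ 1 := by
    have h1 : (P'.height : WithBot ℕ∞) ≤ ringKrullDim (R ⧸ p)[X] :=
      height_le_ringKrullDim_of_isPrime
    have h2 : ringKrullDim (R ⧸ p)[X] ≤ 1 := Order.KrullDimLE.krullDim_le
    exact_mod_cast h1.trans h2
  rwa [← e.height_map <| P.map (Ideal.Quotient.mk <| p.map (algebraMap R R[X]))]

attribute [local instance] Polynomial.algebra Polynomial.isLocalization in
lemma ht_le (p : Ideal R) (P : Ideal R[X]) [hP : P.IsPrime] [P.LiesOver p] :
    P.height ≤ p.height + 1 := by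
  have : p.IsPrime := by rw [P.over_def p]; infer_instance
  let Rₚ := Localization.AtPrime p
  set p' : Ideal Rₚ := p.map (algebraMap R Rₚ) with p'_def
  have : p'.IsMaximal := by
    rw [p'_def, Localization.AtPrime.map_eq_maximalIdeal]
    exact IsLocalRing.maximalIdeal.isMaximal Rₚ
  let P' : Ideal Rₚ[X] := P.map (algebraMap R[X] Rₚ[X])
  have disj : Disjoint (p.primeCompl.map C : Set R[X]) P := by
    refine Set.disjoint_left.mpr fun a ⟨b, hb⟩ ha ↦ hb.1 ?_
    rwa [SetLike.mem_coe, LiesOver.over (P := P) (p := p), mem_comap, algebraMap_eq, hb.2]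
  have : P'.IsPrime := IsLocalization.isPrime_of_isPrime_disjoint (p.primeCompl.map C) _ _ hP disj
  have : P'.LiesOver p' := liesOver_of_isPrime_of_disjoint p.primeCompl _ _ disj
  have eq1 : p.height = p'.height := by
    rw [height_map_of_disjoint p.primeCompl]
    exact Disjoint.symm <| Set.disjoint_left.mpr fun _ a b ↦ b a
  have eq2 : P.height = P'.height := by
    rw [height_map_of_disjoint (Submonoid.map C <| p.primeCompl) _ disj]
  rw [eq1, eq2]
  apply ht_le_max p' P'

lemma ht_contract (I : Ideal R[X]) (g : R[X]) (hg : g.Monic) (hgI : g ∈ I) :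
    I.height ≤ (I.comap (C : R →+* R[X])).height + 1 := by
  by_cases htop : (I.comap (C : R →+* R[X])).height = ⊤
  · rw [htop]; simp
  obtain ⟨n, hn⟩ := ENat.ne_top_iff_exists.1 htop
  obtain ⟨q, hq, hIq, hqn⟩ := Ideal.exists_isPrime_height_eq hn.symm
  rw [← hn, ← hqn]
  have := hg.finite_adjoinRoot
  obtain ⟨Q, hQI, hQ, hQq⟩ := Ideal.exists_ideal_over_prime_of_isIntegral (S := AdjoinRoot g) q
    (I.map (AdjoinRoot.mk g)) (by
      intro x hx
      apply hIq
      rw [Ideal.mem_comap, Ideal.mem_map_iff_of_surjective _ AdjoinRoot.mk_surjective] at hx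
      obtain ⟨p, hp, hpx⟩ := hx
      rw [AdjoinRoot.algebraMap_eq, ← AdjoinRoot.mk_C, AdjoinRoot.mk_eq_mk] at hpx
      rw [Ideal.mem_comap]
      have h1 : p - C x ∈ I := Ideal.mem_of_dvd _ hpx hgI
      have h2 := I.sub_mem hp h1
      simpa using h2)
  let P := Q.comap (AdjoinRoot.mk g)
  have hP : P.IsPrime := Ideal.comap_isPrime _ _
  have hPq : P.LiesOver q := ⟨by
    rw [← hQq]
    ext x
    simp only [P, Ideal.mem_comap, Ideal.under, AdjoinRoot.algebraMap_eq, ← AdjoinRoot.mk_C]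
    rfl⟩
  refine le_trans (Ideal.height_mono ?_) (ht_le q P)
  exact Ideal.map_le_iff_le_comap.1 hQI

end HtPoly

open RingTheory.Sequence

lemma wreg_ones {R : Type} [CommRing R] (n : ℕ) (M : Type) [AddCommGroup M] [Module R M] :
    IsWeaklyRegular M (List.replicate n (1 : R)) := by
  induction n generalizing M with
  | zero => simp
  | succ n ih =>
    rw [List.replicate_succ, isWeaklyRegular_cons_iff]
    exact ⟨IsSMulRegular.one M, ih _⟩

lemma wreg_append_monic {A : Type} [CommRing A] (rs : List A) (h : IsWeaklyRegular A rs) (g : A[X])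
    (hg : g.Monic) : IsWeaklyRegular A[X] (rs.map (C : A →+* A[X]) ++ [g]) := by
  rw [isWeaklyRegular_append_iff, isWeaklyRegular_singleton_iff]
  refine ⟨IsWeaklyRegular.of_flat h, ?_⟩
  rw [isSMulRegular_quotient_iff_mem_of_smul_mem]
  intro p hp
  have hof : (Ideal.ofList (rs.map (C : A →+* A[X])) • ⊤ : Submodule A[X] A[X]) =
      (Ideal.ofList rs).map C := by
    rw [Ideal.map_ofList, smul_eq_mul, Ideal.mul_top]
  rw [hof] at hp ⊢
  have key : ∀ p : A[X], p ∈ (Ideal.ofList rs).map (C : A →+* A[X]) ↔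
      p.map (Ideal.Quotient.mk (Ideal.ofList rs)) = 0 := by
    intro p
    rw [Ideal.mem_map_C_iff, Polynomial.ext_iff]
    refine forall_congr' fun n => ?_
    rw [coeff_map, coeff_zero, Ideal.Quotient.eq_zero_iff_mem]
  rw [key] at hp ⊢
  rw [smul_eq_mul, Polynomial.map_mul] at hp
  exact (hg.map _).mul_right_eq_zero_iff.1 hp

lemma exists_wreg {K : Type} [Field K] (m n : ℕ) (I : Ideal (MvPolynomial (Fin m) K))
    (h : (n : ℕ∞) ≤ I.height) : ∃ rs : List (MvPolynomial (Fin m) K), rs.length = n ∧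
      (∀ r ∈ rs, r ∈ I) ∧ IsWeaklyRegular (MvPolynomial (Fin m) K) rs := by
  induction m generalizing n with
  | zero =>
    by_cases hI : I = ⊥
    · subst hI
      rw [Ideal.height_bot] at h
      have : n = 0 := by simpa using h
      subst this
      exact ⟨[], rfl, by simp, by simp⟩
    · obtain ⟨g, hg, hg0⟩ := Submodule.exists_mem_ne_zero_of_ne_bot hI
      have : I = ⊤ := by
        rw [MvPolynomial.eq_C_of_isEmpty g] at hg hg0
        refine Ideal.eq_top_of_isUnit_mem _ hg ?_
        have : MvPolynomial.coeff 0 g ≠ 0 := fun h => hg0 (by rw [h, MvPolynomial.C_0])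
        exact (isUnit_iff_ne_zero.2 this).map MvPolynomial.C
      exact ⟨List.replicate n 1, by simp, by simp [this], wreg_ones n _⟩
  | succ m ih =>
    rcases n with _ | n
    · exact ⟨[], rfl, by simp, by simp⟩
    have hI : I ≠ ⊥ := by
      rintro rfl
      rw [Ideal.height_bot] at h
      simp at h
    obtain ⟨g, hg, hg0⟩ := Submodule.exists_mem_ne_zero_of_ne_bot hI
    let e := ((NagataPrep.nagT g).trans (MvPolynomial.finSuccEquiv K m)).toRingEquiv
    obtain ⟨u, hu⟩ : IsUnit (e g).leadingCoeff := NagataPrep.T_leadingcoeff_isUnit g hg0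
    let I' := I.map e
    let g' := e g * C (↑u⁻¹ : MvPolynomial (Fin m) K)
    have hg'I : g' ∈ I' := Ideal.mul_mem_right _ _ (Ideal.mem_map_of_mem _ hg)
    have hg'm : g'.Monic := by
      have : (e g).leadingCoeff * (↑u⁻¹ : MvPolynomial (Fin m) K) = 1 := by rw [← hu]; simp
      exact Polynomial.monic_mul_C_of_leadingCoeff_mul_eq_one this
    have hht : (n : ℕ∞) ≤ (I'.comap (C : MvPolynomial (Fin m) K →+* _)).height := by
      have h1 := HtPoly.ht_contract I' g' hg'm hg'I
      rw [show I'.height = I.height from e.height_map I] at h1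
      have h2 := h.trans h1
      push_cast at h2
      exact (ENat.add_le_add_iff_right ENat.one_ne_top).1 h2
    obtain ⟨rs, hlen, hmem, hreg⟩ := ih n _ hht
    refine ⟨(rs.map (C : MvPolynomial (Fin m) K →+* _) ++ [g']).map e.symm, by simp [hlen], ?_, ?_⟩
    · intro r hr
      obtain ⟨s, hs, rfl⟩ := List.mem_map.1 hr
      have hs' : s ∈ I' := by
        rcases List.mem_append.1 hs with hs | hs
        · obtain ⟨t, ht, rfl⟩ := List.mem_map.1 hs
          exact hmem t ht
        · rw [List.mem_singleton.1 hs]; exact hg'I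
      rw [Ideal.mem_map_iff_of_surjective _ e.surjective] at hs'
      obtain ⟨x, hx, rfl⟩ := hs'
      simpa using hx
    · refine (AddEquiv.isWeaklyRegular_congr (e := e.symm.toAddEquiv) ?_).1
        (wreg_append_monic rs hreg g' hg'm)
      rw [List.forall₂_map_right_iff, List.forall₂_same]
      intro x _ y
      simp

lemma le_height_of_idealHeight {A : Type} [CommRing A] (I : Ideal A) :
    idealHeight I ≤ I.height := by
  rw [Ideal.height_eq_inf_minimalPrimes]
  refine le_iInf₂ fun J hJ => ?_
  have := hJ.1.1
  refine (iInf₂_le (⟨J, this⟩ : PrimeSpectrum A) hJ.1.2).trans ?_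
  rw [← PrimeSpectrum.height_eq_orderHeight]

open MvPolynomial in
lemma wreg_vars {σ A : Type} [CommRing A] (l : List σ) (hl : l.Nodup) :
    IsWeaklyRegular (MvPolynomial σ A) (l.map (X : σ → MvPolynomial σ A)) := by
  classical
  induction l using List.reverseRecOn with
  | nil => simp
  | append_singleton l a ih =>
    rw [List.nodup_append] at hl
    rw [List.map_append, isWeaklyRegular_append_iff, List.map_singleton,
      isWeaklyRegular_singleton_iff]
    refine ⟨ih hl.1, ?_⟩
    rw [isSMulRegular_quotient_iff_mem_of_smul_mem]
    intro p hp
    have hof : (Ideal.ofList (l.map (X : σ → MvPolynomial σ A)) • ⊤ :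
        Submodule (MvPolynomial σ A) (MvPolynomial σ A)) =
        Ideal.span (X '' {s | s ∈ l}) := by
      rw [smul_eq_mul, Ideal.mul_top, Ideal.ofList]
      congr 1
      ext x
      simp
    rw [hof] at hp ⊢
    rw [mem_ideal_span_X_image] at hp ⊢
    intro d hd
    obtain ⟨i, hi, hid⟩ := hp (d + Finsupp.single a 1) (by
      rw [MvPolynomial.mem_support_iff, smul_eq_mul, mul_comm, MvPolynomial.coeff_mul_X]
      exact MvPolynomial.mem_support_iff.1 hd)
    refine ⟨i, hi, ?_⟩
    have hai : a ≠ i := fun h => hl.2.2 i hi a (by simp) h.symm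
    simpa [Finsupp.single_apply, hai] using hid
end partP3b

section partP4
lemma pdLT_sub1 {R V W : Type} [CommRing R] [AddCommGroup V] [Module R V] [AddCommGroup W] [Module R W]
    (g : V →ₗ[R] W) (P P' : Submodule R V) (Q : Submodule R W) (hQ : P.map g = Q)
    (hP' : P ⊓ LinearMap.ker g = P') {n : ℕ} (h1 : pdLT R P' n) (h2 : pdLT R P (n + 1)) :
    pdLT R Q (n + 1) := by
  subst hQ hP'
  refine pdLT_surj (g.submoduleMap P) (g.submoduleMap_surjective P) ?_ h2
  refine pdLT_equiv (M := ↥(P ⊓ LinearMap.ker g)) ?_ h1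
  refine (Submodule.comap_equiv_self_of_inj_of_le (f := P.subtype)
    P.injective_subtype (p := P ⊓ LinearMap.ker g) (by simp)).symm.trans (LinearEquiv.ofEq _ _ ?_)
  ext x
  simp [Subtype.ext_iff]

lemma pdLT_sub2 {R V W : Type} [CommRing R] [AddCommGroup V] [Module R V] [AddCommGroup W] [Module R W]
    (g : V →ₗ[R] W) (P P' : Submodule R V) (Q : Submodule R W) (hQ : P.map g = Q)
    (hP' : P ⊓ LinearMap.ker g = P') {n : ℕ} (h1 : pdLT R P n) (h2 : pdLT R Q (n + 1)) :
    pdLT R P' n := by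
  subst hQ hP'
  have := pdLT_ker (g.submoduleMap P) (g.submoduleMap_surjective P) h1 h2
  refine pdLT_equiv ?_ this
  refine LinearEquiv.symm ?_
  refine (Submodule.comap_equiv_self_of_inj_of_le (f := P.subtype)
    P.injective_subtype (p := P ⊓ LinearMap.ker g) (by simp)).symm.trans (LinearEquiv.ofEq _ _ ?_)
  ext x
  simp [Subtype.ext_iff]

section upper
variable {S : Type} [CommRing S]

/-- evaluation of the degree one differential -/
noncomputable def kd1 (f : ℕ → S) (N : ℕ) : (KT N 1 → S) →ₗ[S] S :=
  (LinearMap.proj (KT.z N (1 - 1) (by norm_num))).comp (kdl f N 1)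

/-- the ideal of linear relations -/
noncomputable def JJ (f y : ℕ → S) (N : ℕ) : Ideal S :=
  (LinearMap.ker (kd1 f N)).map (kd1 y N)

lemma kd1_eq_zero (f : ℕ → S) (N : ℕ) (w : KT N 1 → S) : kd1 f N w = 0 ↔ kd f N 1 w = 0 := by
  constructor
  · intro h
    funext x
    rw [KT.sub N _ (by norm_num) x]
    exact h
  · intro h
    exact congrFun h _

lemma mem_JJ (f y : ℕ → S) (N : ℕ) (p : S) : p ∈ JJ f y N ↔
    ∃ c : ℕ → S, ∑ j ∈ Finset.range N, f j • c j = 0 ∧ p = ∑ j ∈ Finset.range N, y j • c j := by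
  constructor
  · rintro ⟨w, hw, rfl⟩
    obtain ⟨c, hc⟩ := kd_one N 1 (by norm_num) w (R := S)
    refine ⟨c, ?_, hc y⟩
    rw [← hc f]
    exact hw
  · rintro ⟨c, hc, rfl⟩
    obtain ⟨w, hw⟩ := kd_one' N 1 (by norm_num) c (R := S)
    refine ⟨w, ?_, hw y⟩
    exact (hw f).trans hc

lemma range_kd1 (f : ℕ → S) (N : ℕ) :
    (⊤ : Submodule S (KT N 1 → S)).map (kd1 f N) = Ideal.span (f '' {j | j < N}) := by
  apply le_antisymm
  · rintro _ ⟨w, -, rfl⟩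
    obtain ⟨c, hc⟩ := kd_one N 1 (by norm_num) w (R := S)
    have : kd1 f N w = _ := hc f
    rw [this]
    refine Ideal.sum_mem _ fun j hj => Ideal.mul_mem_right _ _ (Ideal.subset_span ⟨j, by simpa using hj, rfl⟩)
  · refine Ideal.span_le.2 ?_
    rintro _ ⟨j, hj, rfl⟩
    obtain ⟨w, hw⟩ := kd_one' N 1 (by norm_num) (fun l => if l = j then (1 : S) else 0) (R := S)
    refine ⟨w, trivial, (hw f).trans ?_⟩
    simpa using fun h => absurd hj (by simpa using h)

variable (f y : ℕ → S) (n : ℕ) (hn : 1 ≤ n)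
  (Hf : ∀ i, 2 ≤ i - 1 → KEx f S (n + 1) i)
  (Hz : ∀ i, 1 ≤ i - 1 → ∀ z : KT (n + 1) (i - 1) → S, kd f (n + 1) (i - 1) z = 0 →
    kd y (n + 1) (i - 1) z = 0 → ∃ u : KT (n + 1) i → S, kd f (n + 1) i u = 0 ∧ kd y (n + 1) i u = z)
include hn Hf

lemma pd_Z (j : ℕ) : ∀ i : ℤ, i = n + 1 - j → 2 ≤ i →
    pdLT S (LinearMap.ker (kdl (M := S) f (n + 1) i)) j := by
  induction j with
  | zero =>
    intro i hi h2
    rw [pdLT_zero_iff, Submodule.subsingleton_iff_eq_bot, eq_bot_iff]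
    obtain ⟨i, rfl⟩ : ∃ i', i = i' - 1 := ⟨i + 1, by ring⟩
    intro z hz
    obtain ⟨v, rfl⟩ := Hf i h2 z hz
    have := KT.isEmpty_big (n + 1) i (by push_cast at *; omega)
    rw [Subsingleton.elim v 0, kd_zero]
    rfl
  | succ j ih =>
    intro i hi h2
    obtain ⟨i, rfl⟩ : ∃ i', i = i' - 1 := ⟨i + 1, by ring⟩
    refine pdLT_sub1 (kdl f (n + 1) i) ⊤ _ _ ?_ (top_inf_eq _) (ih i (by push_cast at hi; omega) (by omega))
      (pdLT_equiv Submodule.topEquiv.symm (pdLT_proj j))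
    ext z
    constructor
    · rintro ⟨w, -, rfl⟩
      exact kd_kd f _ _ w
    · intro hz
      obtain ⟨v, rfl⟩ := Hf i h2 z hz
      exact ⟨v, trivial, rfl⟩

include Hz
lemma pd_W (j : ℕ) : ∀ i : ℤ, i = n - j → 1 ≤ i →
    pdLT S ↥(LinearMap.ker (kdl (M := S) f (n + 1) i) ⊓ LinearMap.ker (kdl (M := S) y (n + 1) i)) j := by
  induction j with
  | zero =>
    intro i hi h2
    rw [pdLT_zero_iff, Submodule.subsingleton_iff_eq_bot, eq_bot_iff]
    obtain ⟨i, rfl⟩ : ∃ i', i = i' - 1 := ⟨i + 1, by ring⟩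
    rintro z ⟨hz, hz'⟩
    obtain ⟨v, hv, rfl⟩ := Hz i h2 z hz hz'
    have h0 := pd_Z f n hn Hf 0 i (by push_cast at *; omega) (by omega)
    rw [pdLT_zero_iff, Submodule.subsingleton_iff_eq_bot, eq_bot_iff] at h0
    have : v = 0 := h0 hv
    rw [this, kd_zero]
    rfl
  | succ j ih =>
    intro i hi h2
    obtain ⟨i, rfl⟩ : ∃ i', i = i' - 1 := ⟨i + 1, by ring⟩
    have a1 := ih i (by push_cast at hi; omega) (by omega)
    have a2 := pd_Z f n hn Hf (j + 1) i (by push_cast at *; omega) (by omega)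
    refine pdLT_sub1 (kdl (M := S) y (n + 1) i) _ _ _ ?_ (Eq.refl _) a1 a2
    ext z
    constructor
    · rintro ⟨w, hw, rfl⟩
      refine ⟨?_, kd_kd y _ _ w⟩
      change kd f _ _ (kd y _ _ w) = 0
      have hw' : kd f (n + 1) i w = 0 := hw
      rw [kd_anti, hw', kd_zero, neg_zero]
    · rintro ⟨hz, hz'⟩
      obtain ⟨v, hv, rfl⟩ := Hz i h2 z hz hz'
      exact ⟨v, hv, rfl⟩

lemma pd_upper (k t : ℕ) (hk : pdLT S (S ⧸ Ideal.span (f '' {j | j < n + 1})) (k + 1)) (hkt : k ≤ t + 1)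
    (hnt : n ≤ t) : pdLT S (S ⧸ JJ f y (n + 1)) (t + 1) := by
  obtain ⟨t, rfl⟩ : ∃ t', t = t' + 1 := ⟨t - 1, by omega⟩
  have h1 : pdLT S ↥(Ideal.span (f '' {j | j < n + 1})) (t + 1 + 1) := by
    have := pdLT_ker (n := t + 1 + 1) (Submodule.mkQ (Ideal.span (f '' {j | j < n + 1})))
      (Submodule.mkQ_surjective _) (pdLT_proj _) (pdLT_mono hk (by omega))
    exact pdLT_equiv (LinearEquiv.ofEq _ _ (Submodule.ker_mkQ _)) this
  have h2 : pdLT S (LinearMap.ker (kd1 f (n + 1))) (t + 1) :=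
    pdLT_sub2 (kd1 f (n + 1)) ⊤ _ _ (range_kd1 f (n + 1)) (top_inf_eq _)
      (pdLT_equiv Submodule.topEquiv.symm (pdLT_proj t)) h1
  have h3 := pd_W f y n hn Hf Hz (n - 1) 1 (by omega) le_rfl
  have h4 : pdLT S ↥(JJ f y (n + 1)) (t + 1) := by
    refine pdLT_sub1 (kd1 y (n + 1)) (LinearMap.ker (kd1 f (n + 1))) _ _ rfl ?_ (pdLT_mono h3 (by omega)) h2
    ext w
    simp only [Submodule.mem_inf, LinearMap.mem_ker, kd1_eq_zero]
    rfl
  refine pdLT_surj (Submodule.mkQ (JJ f y (n + 1))) (Submodule.mkQ_surjective _) ?_ (pdLT_proj _)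
  exact pdLT_equiv (LinearEquiv.ofEq _ _ (Submodule.ker_mkQ _).symm) h4

end upper
end partP4

section partP5
section P5
open MvPolynomial RingTheory.Sequence

variable {B : Type} [CommRing B] {n : ℕ}

/-- extension by zero of a family -/
noncomputable def extN {A : Type} [CommRing A] (f : Fin (n + 1) → A) : ℕ → A :=
  fun j => if h : j < n + 1 then f ⟨j, h⟩ else 0

lemma extN_val {A : Type} [CommRing A] (f : Fin (n + 1) → A) (j : Fin (n + 1)) : extN f j = f j := by
  rw [extN, dif_pos j.2]

lemma extN_image {A : Type} [CommRing A] (f : Fin (n + 1) → A) :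
    extN f '' {j | j < n + 1} = Set.range f := by
  ext x
  constructor
  · rintro ⟨j, hj, rfl⟩
    exact ⟨⟨j, hj⟩, (extN_val f ⟨j, hj⟩).symm⟩
  · rintro ⟨j, rfl⟩
    exact ⟨j, j.2, extN_val f j⟩

lemma C_extN (f : Fin (n + 1) → B) (σ : Type) :
    (fun j => (C (extN f j) : MvPolynomial σ B)) = extN (fun j => C (f j)) := by
  funext j
  unfold extN
  split_ifs <;> simp

lemma yKEx (i : ℤ) (hi : 1 ≤ i - 1) :
    KEx (extN (X : Fin (n + 1) → MvPolynomial (Fin (n + 1)) B)) (MvPolynomial (Fin (n + 1)) B) (n + 1) i := by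
  refine kd_depth _ _ ((List.finRange (n + 1)).map X) ?_ _ (wreg_vars _ (List.nodup_finRange _)) i ?_
  · intro a ha
    rw [extN_image]
    simp only [List.mem_map] at ha
    obtain ⟨j, -, rfl⟩ := ha
    exact Ideal.subset_span ⟨j, rfl⟩
  · simp
    omega

lemma fKEx (f : Fin (n + 1) → B) (rs : List B) (hrs : ∀ a ∈ rs, a ∈ Ideal.span (Set.range f))
    (hl : rs.length = n) (hreg : IsWeaklyRegular B rs) (i : ℤ) (hi : 2 ≤ i - 1) :
    KEx (fun j => (C (extN f j) : MvPolynomial (Fin (n + 1)) B)) (MvPolynomial (Fin (n + 1)) B) (n + 1) i := by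
  rw [C_extN]
  refine kd_depth _ _ (rs.map C) ?_ _ (hreg.of_flat (S := MvPolynomial (Fin (n + 1)) B)) i ?_
  · intro a ha
    rw [extN_image]
    simp only [List.mem_map] at ha
    obtain ⟨b, hb, rfl⟩ := ha
    have := Ideal.mem_map_of_mem (C : B →+* MvPolynomial (Fin (n + 1)) B) (hrs b hb)
    rw [Ideal.map_span, ← Set.range_comp] at this
    exact this
  · simp [hl]
    omega

lemma pd_SI (f : Fin (n + 1) → B) (k : ℕ) (h : pdLT B (B ⧸ Ideal.span (Set.range f)) k) :
    pdLT (MvPolynomial (Fin (n + 1)) B) (MvPolynomial (Fin (n + 1)) B ⧸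
      Ideal.span ((fun j => (C (extN f j) : MvPolynomial (Fin (n + 1)) B)) '' {j | j < n + 1})) k := by
  have h1 := pdLT_baseChange (MvPolynomial (Fin (n + 1)) B) k h
  refine pdLT_equiv ?_ h1
  rw [C_extN, extN_image]
  have : Ideal.span (Set.range fun j => (C (f j) : MvPolynomial (Fin (n + 1)) B)) =
      (Ideal.span (Set.range f)).map (algebraMap B (MvPolynomial (Fin (n + 1)) B)) := by
    rw [Ideal.map_span, ← Set.range_comp]; rfl
  rw [this]
  exact (Ideal.qoutMapEquivTensorQout (MvPolynomial (Fin (n + 1)) B)).symm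


lemma rees_X (I : Ideal B) (f : Fin (n + 1) → B) (hf : ∀ j, f j ∈ I) (j : Fin (n + 1)) :
    ((reesStructureMap I f hf (X j) : reesAlgebra I) : Polynomial B) = Polynomial.C (f j) * Polynomial.X := by
  simp [reesStructureMap, fX]

lemma rees_C (I : Ideal B) (f : Fin (n + 1) → B) (hf : ∀ j, f j ∈ I) (b : B) :
    ((reesStructureMap I f hf (C b) : reesAlgebra I) : Polynomial B) = Polynomial.C b := by
  simp [reesStructureMap]

lemma rees_surj (I : Ideal B) (f : Fin (n + 1) → B) (hf : ∀ j, f j ∈ I)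
    (hI : I = Ideal.span (Set.range f)) : Function.Surjective (reesStructureMap I f hf) := by
  have h := adjoin_monomial_eq_reesAlgebra I
  have hI1 : ∀ g (hg : g ∈ I), ∃ p, ((reesStructureMap I f hf p : reesAlgebra I) : Polynomial B) = Polynomial.monomial 1 g := by
    intro g hg
    rw [hI] at hg
    induction hg using Submodule.span_induction with
    | mem x h =>
      obtain ⟨j, rfl⟩ := h
      exact ⟨X j, by rw [rees_X, Polynomial.C_mul_X_eq_monomial]⟩
    | zero => exact ⟨0, by simp⟩
    | add x y _ _ h1 h2 =>
      obtain ⟨p, hp⟩ := h1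
      obtain ⟨q, hq⟩ := h2
      exact ⟨p + q, by rw [map_add, map_add, ← hp, ← hq]; rfl⟩
    | smul a x _ h1 =>
      obtain ⟨p, hp⟩ := h1
      refine ⟨C a * p, ?_⟩
      rw [map_mul]
      change ((reesStructureMap I f hf (C a) : reesAlgebra I) : Polynomial B) * _ = _
      rw [hp, rees_C, Polynomial.C_mul_monomial, smul_eq_mul]
  have key : (reesAlgebra I) ≤ ((reesAlgebra I).val.comp (reesStructureMap I f hf)).range := by
    refine h.ge.trans ?_
    refine Algebra.adjoin_le ?_
    rintro _ ⟨g, hg, rfl⟩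
    obtain ⟨p, hp⟩ := hI1 g hg
    exact ⟨p, hp⟩
  rintro ⟨x, hx⟩
  obtain ⟨p, hp⟩ := key hx
  exact ⟨p, Subtype.ext hp⟩

lemma sum_extN {A : Type} [CommRing A] (f : Fin (n + 1) → A) (c : ℕ → A) :
    ∑ j ∈ Finset.range (n + 1), extN f j • c j = ∑ j : Fin (n + 1), f j * c j := by
  rw [Finset.sum_range]
  simp [extN_val]

/-- the relation ideal -/
noncomputable def JR (f : Fin (n + 1) → B) : Ideal (MvPolynomial (Fin (n + 1)) B) :=
  JJ (fun j => (C (extN f j) : MvPolynomial (Fin (n + 1)) B)) (extN X) (n + 1)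

lemma mem_JR (f : Fin (n + 1) → B) (p : MvPolynomial (Fin (n + 1)) B) : p ∈ JR f ↔
    ∃ c : Fin (n + 1) → MvPolynomial (Fin (n + 1)) B, ∑ j, C (f j) * c j = 0 ∧ p = ∑ j, X j * c j := by
  rw [JR, C_extN, mem_JJ]
  constructor
  · rintro ⟨c, h1, h2⟩
    rw [sum_extN] at h1 h2
    exact ⟨fun j => c j, h1, h2⟩
  · rintro ⟨c, h1, h2⟩
    refine ⟨extN c, ?_⟩
    rw [sum_extN, sum_extN]
    simp only [extN_val]
    exact ⟨h1, h2⟩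

lemma ylinear_eq (p : MvPolynomial (Fin (n + 1)) B) (hp : YLinear p) :
    p = C (coeff 0 p) + ∑ j, C (coeff (Finsupp.single j 1) p) * X j := by
  classical
  ext w
  simp only [coeff_add, coeff_sum, coeff_C, coeff_C_mul, coeff_X]
  by_cases hw : coeff w p = 0
  · rw [hw]
    by_cases h0 : w = 0
    · subst h0
      simp [hw]
    · rw [if_neg (Ne.symm h0), zero_add, eq_comm]
      refine Finset.sum_eq_zero fun j _ => ?_
      split_ifs with h
      · rw [h, hw, zero_mul]
      · simp
  · have h1 := hp w hw
    by_cases h0 : w = 0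
    · subst h0
      simp
    · obtain ⟨j, hj⟩ : ∃ j, w j ≠ 0 := by
        by_contra! hcon
        exact h0 (Finsupp.ext hcon)
      have hwj : w = Finsupp.single j 1 := by
        ext l
        have h2 : w j + ∑ l ∈ Finset.univ.erase j, w l ≤ 1 := by
          rwa [Finset.add_sum_erase _ _ (Finset.mem_univ j)]
        by_cases hl : l = j
        · subst hl; simp; omega
        · have := Finset.single_le_sum (f := w) (fun _ _ => Nat.zero_le _)
            (Finset.mem_erase.2 ⟨hl, Finset.mem_univ l⟩)
          rw [Finsupp.single_apply, if_neg (Ne.symm hl)]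
          omega
      subst hwj
      rw [if_neg (Ne.symm h0), zero_add, Finset.sum_eq_single j]
      · simp
      · intro b _ hb
        rw [if_neg, mul_zero]
        intro h
        exact hb (Finsupp.single_left_injective one_ne_zero h)
      · simp

lemma ker_rees (I : Ideal B) (f : Fin (n + 1) → B) (hf : ∀ j, f j ∈ I)
    (hlt : IsLinearTypePres (reesStructureMap I f hf)) :
    RingHom.ker (reesStructureMap I f hf).toRingHom = JR f := by
  obtain ⟨G, hG, hker⟩ := hlt
  have hJ : JR f ≤ RingHom.ker (reesStructureMap I f hf).toRingHom := by
    intro p hp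
    obtain ⟨c, h1, rfl⟩ := (mem_JR f _).1 hp
    rw [RingHom.mem_ker]
    apply Subtype.ext
    have h2 : ((reesStructureMap I f hf (∑ j, C (f j) * c j) : reesAlgebra I) : Polynomial B) = 0 := by
      rw [h1, map_zero]; rfl
    change ((reesStructureMap I f hf (∑ j, X j * c j) : reesAlgebra I) : Polynomial B) = 0
    rw [← (reesAlgebra I).val_apply, map_sum, map_sum] at h2 ⊢
    simp only [map_mul, Subalgebra.val_apply, rees_X, rees_C] at h2 ⊢
    simp only [mul_right_comm _ Polynomial.X]
    rw [← Finset.sum_mul, h2, zero_mul]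
  refine le_antisymm ?_ hJ
  rw [hker]
  refine Ideal.span_le.2 fun p hp => ?_
  have hp0 : p ∈ RingHom.ker (reesStructureMap I f hf).toRingHom := hker ▸ Ideal.subset_span hp
  have hy := ylinear_eq p (hG p hp)
  have h0 : ((reesStructureMap I f hf p : reesAlgebra I) : Polynomial B) = 0 := congrArg Subtype.val hp0
  rw [hy, ← (reesAlgebra I).val_apply, map_add, map_add, map_sum, map_sum] at h0
  simp only [map_mul, Subalgebra.val_apply, rees_X, rees_C] at h0
  have c0 := congrArg (fun q => Polynomial.coeff q 0) h0
  have c1 := congrArg (fun q => Polynomial.coeff q 1) h0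
  simp [Polynomial.coeff_C] at c0 c1
  refine (mem_JR f _).2 ⟨fun j => C (coeff (Finsupp.single j 1) p), ?_, ?_⟩
  · rw [← map_zero C, ← c1, map_sum]
    simp [mul_comm]
  · conv_lhs => rw [hy, c0]
    simp [mul_comm]

lemma pd_rees_iff (I : Ideal B) (f : Fin (n + 1) → B) (hf : ∀ j, f j ∈ I)
    (hI : I = Ideal.span (Set.range f))
    (hlt : IsLinearTypePres (reesStructureMap I f hf)) (t : ℕ) :
    letI := reesModule I f hf
    pdLT (MvPolynomial (Fin (n + 1)) B) (MvPolynomial (Fin (n + 1)) B ⧸ JR f) t ↔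
    pdLT (MvPolynomial (Fin (n + 1)) B) (reesAlgebra I) t := by
  letI := reesModule I f hf
  let g : MvPolynomial (Fin (n + 1)) B →ₗ[MvPolynomial (Fin (n + 1)) B] reesAlgebra I :=
    { toFun := reesStructureMap I f hf
      map_add' := map_add _
      map_smul' := fun a b => map_mul _ a b }
  have hg : LinearMap.ker g = JR f := by
    rw [← ker_rees I f hf hlt]; rfl
  let e : (MvPolynomial (Fin (n + 1)) B ⧸ JR f) ≃ₗ[MvPolynomial (Fin (n + 1)) B] reesAlgebra I :=
    (Submodule.quotEquivOfEq _ _ hg.symm).trans (g.quotKerEquivOfSurjective (rees_surj I f hf hI))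
  exact ⟨pdLT_equiv e, pdLT_equiv e.symm⟩

end P5
end partP5

section partP6
section P6
open MvPolynomial RingTheory.Sequence

lemma pd_lowerA {B : Type} [CommRing B] {n : ℕ} (I : Ideal B) (f : Fin (n + 1) → B) (hf : ∀ j, f j ∈ I)
    (t : ℕ) (h : letI := reesModule I f hf; pdLT (MvPolynomial (Fin (n + 1)) B) (reesAlgebra I) t) :
    pdLT B (B ⧸ I) (t + 1) := by
  letI := reesModule I f hf
  have : IsScalarTower B (MvPolynomial (Fin (n + 1)) B) (reesAlgebra I) := by
    refine IsScalarTower.of_algebraMap_smul fun b x => ?_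
    change reesStructureMap I f hf (algebraMap _ _ b) * x = _
    rw [AlgHom.commutes, Algebra.smul_def]
  have h1 : pdLT B (reesAlgebra I) t := pdLT_restrict t h
  have h2 : pdLT B I t := by
    refine pdLT_retract (M := reesAlgebra I)
      (LinearMap.mk ⟨fun g => fX I g.1 g.2, ?_⟩ ?_)
      (LinearMap.codRestrict I ((Polynomial.lcoeff B 1).comp (reesAlgebra I).val.toLinearMap) ?_) ?_ h1
    · intro x y
      apply Subtype.ext
      simp [fX, add_mul]
    · intro b x
      apply Subtype.ext
      simp [fX, Polynomial.smul_eq_C_mul, mul_assoc]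
    · intro x
      simpa using (mem_reesAlgebra_iff I x.1).1 x.2 1
    · ext x
      simp [fX]
  refine pdLT_surj (Submodule.mkQ I) (Submodule.mkQ_surjective _) ?_ (pdLT_proj _)
  exact pdLT_equiv (LinearEquiv.ofEq _ _ (Submodule.ker_mkQ _).symm) h2

/-- shear automorphism -/
noncomputable def shear {σ L : Type} [CommRing L] (j0 : σ) (d : σ → L) (hd : d j0 = 0) :
    MvPolynomial σ L ≃ₐ[L] MvPolynomial σ L :=
  AlgEquiv.ofAlgHom (aeval fun j => X j - C (d j) * X j0) (aeval fun j => X j + C (d j) * X j0)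
    (by ext j; simp [hd, algebraMap_eq]) (by ext j; simp [hd, algebraMap_eq])

lemma shear_X {σ L : Type} [CommRing L] (j0 : σ) (d : σ → L) (hd : d j0 = 0) (j : σ) :
    shear j0 d hd (X j) = X j - C (d j) * X j0 := by
  simp [shear]

lemma wreg_shear {σ L : Type} [CommRing L] (j0 : σ) (d : σ → L) (hd : d j0 = 0) (l : List σ)
    (hl : l.Nodup) : IsWeaklyRegular (MvPolynomial σ L) (l.map fun j => X j - C (d j) * X j0) := by
  refine (AddEquiv.isWeaklyRegular_congr (e := (shear j0 d hd).toAddEquiv) ?_).1 (wreg_vars l hl)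
  rw [List.forall₂_map_left_iff, List.forall₂_map_right_iff, List.forall₂_same]
  intro j _ x
  change shear j0 d hd (X j * x) = _
  rw [map_mul, shear_X]
  rfl

lemma pd_lowerB {B : Type} [CommRing B] [IsDomain B] {q : ℕ} (f : Fin (q + 1 + 1) → B)
    (j0 : Fin (q + 1 + 1)) (h0 : f j0 ≠ 0) :
    ¬ pdLT (MvPolynomial (Fin (q + 1 + 1)) B) (MvPolynomial (Fin (q + 1 + 1)) B ⧸ JR f) (q + 1) := by
  intro hpd
  set S := MvPolynomial (Fin (q + 1 + 1)) B with hS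
  let L := FractionRing B
  let S' := MvPolynomial (Fin (q + 1 + 1)) L
  letI : Algebra S S' := MvPolynomial.algebraMvPolynomial
  have hfl : Module.Flat S S' :=
    IsLocalization.flat (R := S) S' ((nonZeroDivisors B).map (C : B →+* S))
  have halg : ∀ p : S, algebraMap S S' p = MvPolynomial.map (algebraMap B L) p := fun p => rfl
  have h1 := pdLT_baseChange S' (q + 1) hpd
  let J' : Ideal S' := (JR f).map (algebraMap S S')
  have h2 : pdLT S' (S' ⧸ J') (q + 1) :=
    pdLT_equiv (Ideal.qoutMapEquivTensorQout S').symm h1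
  have hL0 : algebraMap B L (f j0) ≠ 0 := by
    rw [Ne, FaithfulSMul.algebraMap_eq_zero_iff]
    exact h0
  -- nontrivial
  have hne : J' ≠ ⊤ := by
    let ψ : S' →ₐ[L] L := aeval fun j => algebraMap B L (f j)
    have hle : J' ≤ RingHom.ker ψ.toRingHom := by
      refine Ideal.map_le_iff_le_comap.2 fun p hp => ?_
      obtain ⟨c, hc, rfl⟩ := (mem_JR f _).1 hp
      rw [Ideal.mem_comap, RingHom.mem_ker]
      change ψ (algebraMap S S' _) = 0
      have := congrArg (fun p => ψ (algebraMap S S' p)) hc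
      simp only [map_sum, map_mul, map_zero] at this ⊢
      rw [← this]
      refine Finset.sum_congr rfl fun j _ => ?_
      have e1 : ψ (algebraMap S S' (X j)) = algebraMap B L (f j) := by
        rw [halg, map_X]; exact aeval_X _ _
      have e2 : ψ (algebraMap S S' (C (f j))) = algebraMap B L (f j) := by
        rw [halg, map_C]; exact ψ.commutes _
      rw [e1, e2]
    intro htop
    rw [htop, top_le_iff] at hle
    have := (Ideal.eq_top_iff_one _).1 hle
    rw [RingHom.mem_ker, map_one] at this
    exact one_ne_zero this
  let d : Fin (q + 1 + 1) → L := fun j =>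
    if j = j0 then 0 else algebraMap B L (f j) / algebraMap B L (f j0)
  have hd : d j0 = 0 := by simp [d]
  let a : Fin (q + 1) → S' := fun i => X (j0.succAbove i) - C (d (j0.succAbove i)) * X j0
  have ha : ∀ i, a i ∈ J' := by
    intro i
    have hi : j0.succAbove i ≠ j0 := Fin.succAbove_ne j0 i
    have m1 : C (f j0) * X (j0.succAbove i) - C (f (j0.succAbove i)) * X j0 ∈ JR f := by
      refine (mem_JR f _).2 ⟨Pi.single (j0.succAbove i) (C (f j0)) - Pi.single j0 (C (f (j0.succAbove i))), ?_, ?_⟩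
      · simp [mul_sub, Finset.sum_sub_distrib, Pi.single_apply, mul_comm]
      · simp [mul_sub, Finset.sum_sub_distrib, Pi.single_apply, mul_comm]
    have m2 := Ideal.mul_mem_left J' (C (algebraMap B L (f j0))⁻¹) (Ideal.mem_map_of_mem (algebraMap S S') m1)
    have : a i = C (algebraMap B L (f j0))⁻¹ * algebraMap S S' (C (f j0) * X (j0.succAbove i) - C (f (j0.succAbove i)) * X j0) := by
      rw [halg]
      simp only [a, d, if_neg hi, map_sub, map_mul, map_C, map_X, mul_sub, ← mul_assoc]
      rw [← C_mul, ← C_mul, inv_mul_cancel₀ hL0, C_1, one_mul, div_eq_inv_mul]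
    rw [this]
    exact m2
  have hwr : IsWeaklyRegular S' ((List.finRange (q + 1)).map a) := by
    have := wreg_shear j0 d hd ((List.finRange (q + 1)).map j0.succAbove)
      ((List.nodup_finRange _).map Fin.succAbove_right_injective)
    rw [List.map_map] at this
    exact this
  have hK : KEx (extN a) (S' ⧸ J') (q + 1) ((q + 1 : ℕ) + 1) := by
    refine kd_pd (extN a) (q + 1) (q + 1) ?_ _ h2 _ (by simp)
    intro F _ _ _ i hi
    refine kd_depth _ _ ((List.finRange (q + 1)).map a) ?_ _ ?_ i ?_
    · intro b hb
      rw [extN_image]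
      simp only [List.mem_map] at hb
      obtain ⟨j, -, rfl⟩ := hb
      exact Ideal.subset_span ⟨j, rfl⟩
    · exact (LinearEquiv.isWeaklyRegular_congr (TensorProduct.rid S' F) _).1
        (hwr.isWeaklyRegular_lTensor (M₂ := F))
    · simp
      omega
  obtain ⟨v, hv⟩ := hK (fun _ => 1) (kd_allzero _ _ (by
    intro j hj x
    have : extN a j = a ⟨j, hj⟩ := extN_val a ⟨j, hj⟩
    rw [this]
    obtain ⟨x, rfl⟩ := Ideal.Quotient.mk_surjective x
    change Ideal.Quotient.mk J' (a ⟨j, hj⟩ * x) = 0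
    rw [Ideal.Quotient.eq_zero_iff_mem]
    exact Ideal.mul_mem_right _ _ (ha _)) _ _)
  have := KT.isEmpty_big (q + 1) ((q + 1 : ℕ) + 1) (by simp)
  rw [Subsingleton.elim v 0, kd_zero] at hv
  have h1 := congrFun hv (KT.top (q + 1) _ (by simp))
  have : Nontrivial (S' ⧸ J') := Ideal.Quotient.nontrivial_iff.2 hne
  exact zero_ne_one h1


lemma ht_pos_of_zero {K : Type} [Field K] (m : ℕ) (I : Ideal (MvPolynomial (Fin m) K))
    (h : idealHeight I = 0) : I = ⊥ := by
  unfold idealHeight at h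
  by_contra hI
  have : (1 : ℕ∞) ≤ ⨅ (p : PrimeSpectrum (MvPolynomial (Fin m) K)) (_ : I ≤ p.asIdeal), Order.height p := by
    refine le_iInf fun p => le_iInf fun hp => ?_
    rw [ENat.one_le_iff_ne_zero, Ne, Order.height_eq_zero]
    intro hmin
    have h0 : (⟨⊥, Ideal.isPrime_bot⟩ : PrimeSpectrum (MvPolynomial (Fin m) K)) ≤ p := by
      change (⊥ : Ideal _) ≤ p.asIdeal
      exact bot_le
    have h1 : p.asIdeal ≤ ⊥ := hmin h0
    exact hI (le_bot_iff.1 (hp.trans h1))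
  rw [h] at this
  simp at this

lemma minGens_bot {A : Type} [CommRing A] : minGens (⊥ : Ideal A) = 0 := by
  refine Nat.le_zero.1 (Nat.sInf_le ⟨fun i => i.elim0, ?_⟩)
  simp

theorem rees_main (K : Type) [Field K] (m n : ℕ)
    (I : Ideal (MvPolynomial (Fin m) K))
    (f : Fin (n + 1) → MvPolynomial (Fin m) K) (hf : ∀ j, f j ∈ I)
    (hI : I = Ideal.span (Set.range f))
    (hmu : minGens I = n + 1) (hht : idealHeight I = (n : ℕ∞))
    (hlt : IsLinearTypePres (reesStructureMap I f hf)) :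
    (projDim (MvPolynomial (Fin m) K) (MvPolynomial (Fin m) K ⧸ I) = (n : ℕ∞) →
      @projDim (MvPolynomial (Fin (n + 1)) (MvPolynomial (Fin m) K)) _
        (reesAlgebra I) _ (reesModule I f hf) = (n : ℕ∞)) ∧
    (∀ k : ℕ, n < k →
      projDim (MvPolynomial (Fin m) K) (MvPolynomial (Fin m) K ⧸ I) = (k : ℕ∞) →
      @projDim (MvPolynomial (Fin (n + 1)) (MvPolynomial (Fin m) K)) _
        (reesAlgebra I) _ (reesModule I f hf) = (k : ℕ∞) - 1) := by
  have hIb : I ≠ ⊥ := by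
    rintro h
    rw [h, minGens_bot] at hmu
    omega
  obtain ⟨q, rfl⟩ : ∃ q, n = q + 1 := by
    cases n with
    | zero => exact absurd (ht_pos_of_zero m I (by simpa using hht)) hIb
    | succ q => exact ⟨q, rfl⟩
  obtain ⟨j0, hj0⟩ : ∃ j, f j ≠ 0 := by
    by_contra! h
    apply hIb
    rw [hI, Ideal.span_eq_bot]
    rintro _ ⟨j, rfl⟩
    exact h j
  obtain ⟨rs, hl, hrs, hreg⟩ := exists_wreg m (q + 1) I (hht ▸ le_height_of_idealHeight I)
  have Hf := fKEx f rs (fun a ha => hI ▸ hrs a ha) hl hreg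
  have Hz := zacyc (q + 1 + 1) (extN f)
    (extN (X : Fin (q + 1 + 1) → MvPolynomial (Fin (q + 1 + 1)) (MvPolynomial (Fin m) K)))
    (fun j hj => ⟨⟨j, hj⟩, extN_val X ⟨j, hj⟩⟩) yKEx Hf
  have up : ∀ k t : ℕ, projDim (MvPolynomial (Fin m) K) (MvPolynomial (Fin m) K ⧸ I) = (k : ℕ∞) →
      k ≤ t + 1 → q + 1 ≤ t → letI := reesModule I f hf;
      pdLT (MvPolynomial (Fin (q + 1 + 1)) (MvPolynomial (Fin m) K)) (reesAlgebra I) (t + 1) := by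
    intro k t hk hkt hqt
    refine (pd_rees_iff I f hf hI hlt (t + 1)).1 ?_
    refine pd_upper _ _ (q + 1) (by omega) Hf Hz k t ?_ hkt hqt
    refine pd_SI f (k + 1) ?_
    rw [← hI]
    exact (pdLT_of_projDim hk).1
  letI := reesModule I f hf
  constructor
  · intro hk
    refine projDim_eq_of (by omega) (up (q + 1) (q + 1) hk (by omega) le_rfl) ?_
    intro h
    exact pd_lowerB f j0 hj0 ((pd_rees_iff I f hf hI hlt (q + 1)).2 h)
  · intro k hk hpd
    obtain ⟨t, rfl⟩ : ∃ t, k = t + 1 := ⟨k - 1, by omega⟩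
    have : ((t + 1 : ℕ) : ℕ∞) - 1 = (t : ℕ∞) := by
      exact (ENat.natCast_sub (t + 1) 1).symm
    rw [this]
    refine projDim_eq_of (by omega) (up (t + 1) t hpd le_rfl (by omega)) ?_
    intro h
    exact (pdLT_of_projDim hpd).2 (by omega) (pd_lowerA I f hf t h)

end P6
end partP6

/-- Remark 3.4: let `I` be a graded ideal of linear type in a standard graded polynomial
ring `B` over a field of characteristic zero, with `μ(I) = ht(I) + 1 = n + 1` and
`grade(I) = n`.  Then `pd_S R(I) = n` if `pd_B (B/I) = n`, and `pd_S R(I) = k - 1` if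
`pd_B (B/I) = k > n`. -/
theorem projDim_reesAlgebra (K : Type) [Field K] [CharZero K] (m n : ℕ)
    (I : Ideal (MvPolynomial (Fin m) K))
    (f : Fin (n + 1) → MvPolynomial (Fin m) K) (hf : ∀ j, f j ∈ I)
    (hI : I = Ideal.span (Set.range f))
    (hhomog : ∀ j, ∃ dj : ℕ, f j ∈ MvPolynomial.homogeneousSubmodule (Fin m) K dj)
    (hmu : minGens I = n + 1) (hht : idealHeight I = (n : ℕ∞))
    (hlt : IsLinearTypePres (reesStructureMap I f hf)) :
    (projDim (MvPolynomial (Fin m) K) (MvPolynomial (Fin m) K ⧸ I) = (n : ℕ∞) →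
      @projDim (MvPolynomial (Fin (n + 1)) (MvPolynomial (Fin m) K)) _
        (reesAlgebra I) _ (reesModule I f hf) = (n : ℕ∞)) ∧
    (∀ k : ℕ, n < k →
      projDim (MvPolynomial (Fin m) K) (MvPolynomial (Fin m) K ⧸ I) = (k : ℕ∞) →
      @projDim (MvPolynomial (Fin (n + 1)) (MvPolynomial (Fin m) K)) _
        (reesAlgebra I) _ (reesModule I f hf) = (k : ℕ∞) - 1) := 
  rees_main K m n I f hf hI hmu hht hlt
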